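/- Let d ≥ 3 and ε ∈ (0,1), and fix 1 ≤ r_N ≤ N^{1−ε}; let A = B(0,r_N), B = B(0,N^{1−ε/2}), C = B(0,N/4) in T and B′ = B(0,N^{1−ε/2}/2). There exist constants c, c′ > 0 depending only on d and ε such that for all N ≥ 2: (i) sup_{x ∈ T∖B′} P_x[H_A ≤ T_C] ≤ c N^{−c′}; (ii) sup_{x ∈ T∖B} P_x[H_{A ∪ ∂_e A} ≤ t_*] ≤ c N^{−c′}; (iii) sup_{x ∈ T∖C} P_x[H_{B ∪ ∂_e B} ≤ t_*] ≤ c N^{−c′}, where t_* = (N log N)^2 and ∂_e V denotes the external vertex boundary of V. -/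

import Mathlib

open MeasureTheory Filter Classical
open scoped ENNReal NNReal

noncomputable section

namespace Frag

/-! ### Graph-theoretic basics -/

/-- Two vertices of `Fin d → R` are adjacent if they differ in exactly one
coordinate, by `±1` (Euclidean distance one). -/
def adj {d : ℕ} {R : Type*} [AddGroupWithOne R] (x y : Fin d → R) : Prop :=
  x ≠ y ∧ ∃ i : Fin d, (y i = x i + 1 ∨ x i = y i + 1) ∧ ∀ j : Fin d, j ≠ i → x j = y j

/-- The discrete torus `(ℤ/Nℤ)^d`. -/
abbrev Torus (d N : ℕ) := Fin d → ZMod N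

/-- The lattice `ℤ^d`. -/
abbrev Lat (d : ℕ) := Fin d → ℤ

instance (n : ℕ) : MeasurableSpace (ZMod n) := ⊤

/-- The `ℓ∞`-distance on the torus. -/
def torusDist {d N : ℕ} (x y : Torus d N) : ℕ :=
  Finset.univ.sup fun i : Fin d => min (x i - y i).val (y i - x i).val

/-- The `ℓ∞`-distance on the lattice. -/
def latDist {d : ℕ} (x y : Lat d) : ℕ :=
  Finset.univ.sup fun i : Fin d => (x i - y i).natAbs

/-- Closed `ℓ∞`-ball in the torus. -/
def torusBall {d N : ℕ} (x : Torus d N) (r : ℝ) : Set (Torus d N) :=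
  {y | (torusDist x y : ℝ) ≤ r}

/-- Closed `ℓ∞`-ball in the lattice. -/
def latBall {d : ℕ} (x : Lat d) (r : ℝ) : Set (Lat d) :=
  {y | (latDist x y : ℝ) ≤ r}

/-- `x` and `y` are connected by a nearest-neighbour path staying in `S`. -/
def connectedIn {α : Type*} (rel : α → α → Prop) (S : Set α) (x y : α) : Prop :=
  ∃ (n : ℕ) (p : ℕ → α), p 0 = x ∧ p n = y ∧ (∀ k, k ≤ n → p k ∈ S) ∧
    ∀ k, k < n → rel (p k) (p (k + 1))

/-- The connected component of `x` inside `S`. -/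
def compOf {α : Type*} (rel : α → α → Prop) (S : Set α) (x : α) : Set α :=
  {y | connectedIn rel S x y}

/-- `S` is a connected set. -/
def IsConnSet {α : Type*} (rel : α → α → Prop) (S : Set α) : Prop :=
  ∀ x ∈ S, ∀ y ∈ S, connectedIn rel S x y

/-- External vertex boundary. -/
def extBdry {α : Type*} (rel : α → α → Prop) (S : Set α) : Set α :=
  {y | y ∉ S ∧ ∃ x ∈ S, rel x y}

/-- Internal vertex boundary. -/
def intBdry {α : Type*} (rel : α → α → Prop) (S : Set α) : Set α :=
  {x | x ∈ S ∧ ∃ y, y ∉ S ∧ rel x y}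

/-- The cardinality of the largest connected component of `S`. -/
def maxCompSize {α : Type*} (rel : α → α → Prop) (S : Set α) : ℕ :=
  sSup {n | ∃ x ∈ S, n = (compOf rel S x).ncard}

/-- The diameter of a set with respect to a distance. -/
def diamOf {α : Type*} (dist : α → α → ℕ) (S : Set α) : ℕ :=
  sSup {n | ∃ x ∈ S, ∃ y ∈ S, n = dist x y}

/-- The canonical graph isomorphism `φ` from `B(0, N/4) ⊆ (ℤ/Nℤ)^d` onto
`B(0, N/4) ⊆ ℤ^d`, given by the signed representative of each coordinate. -/
def torusToLat {d N : ℕ} (x : Torus d N) : Lat d :=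
  fun i => if ((x i).val : ℝ) ≤ (N : ℝ) / 2 then ((x i).val : ℤ) else ((x i).val : ℤ) - (N : ℤ)

/-! ### Discrete-time simple random walk -/

/-- One-step transition probability of the simple random walk. -/
def srwStep {d : ℕ} {R : Type*} [AddGroupWithOne R] (x y : Fin d → R) : ℝ≥0∞ :=
  if adj x y then ((2 * d : ℕ) : ℝ≥0∞)⁻¹ else 0

/-- `μ` is the law on path space of the discrete-time simple random walk with
initial distribution `init`, characterized by its cylinder probabilities. -/
def IsWalkLaw {d : ℕ} {R : Type*} [AddGroupWithOne R] [MeasurableSpace R]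
    (μ : Measure (ℕ → (Fin d → R))) (init : (Fin d → R) → ℝ≥0∞) : Prop :=
  IsProbabilityMeasure μ ∧
  ∀ (n : ℕ) (w : ℕ → (Fin d → R)),
    μ {ω | ∀ k, k ≤ n → ω k = w k} =
      init (w 0) * ∏ k ∈ Finset.range n, srwStep (w k) (w (k + 1))

/-- The uniform initial distribution on the torus. -/
def unifInit (d N : ℕ) : Torus d N → ℝ≥0∞ := fun _ => ((N : ℝ≥0∞) ^ d)⁻¹

/-- The initial distribution concentrated at `x`. -/
def pointInit {α : Type*} (x : α) : α → ℝ≥0∞ := fun y => if y = x then 1 else 0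

/-- The set of sites visited in the first `t` steps. -/
def visited {α : Type*} (t : ℕ) (ω : ℕ → α) : Set α := {v | ∃ k, k ≤ t ∧ ω k = v}

/-! ### Capacity and random interlacements on `ℤ^d` -/

/-- The event that the walk never returns to `V` after time `0`. -/
def escEvent {d : ℕ} (V : Set (Lat d)) : Set (ℕ → Lat d) :=
  {w | ∀ n, 1 ≤ n → w n ∉ V}

/-- `r` is the (simple random walk) capacity of `V ⊆ ℤ^d`:
`r = Σ_{x ∈ V} P_x[H̃_V = ∞]`. -/
def IsCap (d : ℕ) (V : Set (Lat d)) (r : ℝ) : Prop :=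
  ∃ μ : Lat d → Measure (ℕ → Lat d),
    (∀ x, IsWalkLaw (μ x) (pointInit x)) ∧
    r = ∑ᶠ x ∈ V, ((μ x) (escEvent V)).toReal

/-- `I` is a random interlacement at level `u` on the probability space `(Ω, P)`:
for every finite `V ⊆ ℤ^d`, `P[I ∩ V = ∅] = exp (−u · cap V)`. -/
def IsInterlacement (d : ℕ) (u : ℝ) {Ω : Type*} [MeasurableSpace Ω]
    (P : Measure Ω) (I : Ω → Set (Lat d)) : Prop :=
  IsProbabilityMeasure P ∧
  (∀ x : Lat d, MeasurableSet {ω | x ∈ I ω}) ∧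
  ∀ V : Set (Lat d), V.Finite → ∀ r : ℝ, IsCap d V r →
    P {ω | ∀ x ∈ V, x ∉ I ω} = ENNReal.ofReal (Real.exp (-u * r))

/-- `e = η(u)`, the probability that the origin lies in an infinite component of
the vacant set `V^u = ℤ^d ∖ I^u` of a random interlacement at level `u`. -/
def IsEta (d : ℕ) (u e : ℝ) : Prop :=
  ∃ (Ω : Type) (_ : MeasurableSpace Ω) (P : Measure Ω) (I : Ω → Set (Lat d)),
    IsInterlacement d u P I ∧
    e = (P {ω | (compOf adj ((I ω)ᶜ) (0 : Lat d)).Infinite}).toReal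

/-- The critical level `u_* = inf {u ≥ 0 : η(u) = 0}`. -/
def uStar (d : ℕ) : ℝ := sInf {u | 0 ≤ u ∧ IsEta d u 0}

/-- The probability of an event `E` about a random interlacement at level `u`. -/
def intProb (d : ℕ) (u : ℝ) (E : Set (Lat d) → Prop) : ℝ :=
  sSup {p | ∃ (Ω : Type) (_ : MeasurableSpace Ω) (P : Measure Ω) (I : Ω → Set (Lat d)),
    IsInterlacement d u P I ∧ p = (P {ω | E (I ω)}).toReal}

/-- The event that `B(0,L)` is connected to the external boundary of `B(0,2L)`
by a nearest-neighbour path in `S`. -/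
def connAcross (d L : ℕ) (S : Set (Lat d)) : Prop :=
  ∃ x ∈ latBall (0 : Lat d) (L : ℝ), ∃ y ∈ extBdry adj (latBall (0 : Lat d) (2 * (L : ℝ))),
    connectedIn adj S x y

/-- The critical level `u_** = inf {u ≥ 0 : α(u) > 0}`. -/
def uStarStar (d : ℕ) : ℝ :=
  sInf {u | 0 ≤ u ∧ ∃ a : ℝ, 0 < a ∧
    Tendsto (fun L : ℕ => (L : ℝ) ^ a * intProb d u fun I => connAcross d L Iᶜ)
      atTop (nhds 0)}

/-- `u` is a strongly supercritical level for random interlacements on `ℤ^d`. -/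
def StronglySupercritical (d : ℕ) (u : ℝ) : Prop :=
  ∃ μ : ℝ, 0 < μ ∧
  ∃ (Ω : Type) (_ : MeasurableSpace Ω) (P : Measure Ω) (I : ℝ → Ω → Set (Lat d)),
    (∀ v : ℝ, 0 ≤ v → IsInterlacement d v P (I v)) ∧
    (∀ v v' : ℝ, v ≤ v' → ∀ ω, I v ω ⊆ I v' ω) ∧
    ∃ N₀ : ℕ, ∀ N : ℕ, N₀ ≤ N →
      (1 - Real.exp (-(N : ℝ) ^ μ) ≤
        (P {ω | ∃ x ∈ latBall (0 : Lat d) (N : ℝ),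
          (compOf adj ((I (u * (1 + μ)) ω)ᶜ) x).Infinite}).toReal) ∧
      (1 - Real.exp (-(N : ℝ) ^ μ) ≤
        (P {ω | ∀ S₁ S₂ : Set (Lat d),
            S₁ ⊆ (I (u * (1 - μ)) ω)ᶜ ∩ latBall 0 (N : ℝ) →
            S₂ ⊆ (I (u * (1 - μ)) ω)ᶜ ∩ latBall 0 (N : ℝ) →
            IsConnSet adj S₁ → IsConnSet adj S₂ →
            (N : ℝ) / 8 ≤ (diamOf latDist S₁ : ℝ) →
            (N : ℝ) / 8 ≤ (diamOf latDist S₂ : ℝ) →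
            ∃ x ∈ S₁, ∃ y ∈ S₂,
              connectedIn adj ((I (u * (1 + μ)) ω)ᶜ ∩ latBall 0 (2 * (N : ℝ))) x y}).toReal)

/-! ### Continuous-time walk -/

/-- Sample space for the continuous-time walk: a discrete path together with
the i.i.d. exponential interarrival gaps of the driving Poisson process. -/
abbrev CTPath (d N : ℕ) := (ℕ → Torus d N) × (ℕ → ℝ)

/-- The number of jumps performed up to time `t`. -/
def nJumps (g : ℕ → ℝ) (t : ℝ) : ℕ := sSup {n | ∑ k ∈ Finset.range n, g k ≤ t}

/-- The position of the continuous-time walk at time `t`. -/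
def ctPos {d N : ℕ} (ω : CTPath d N) (t : ℝ) : Torus d N := ω.1 (nJumps ω.2 t)

/-- `ν` is the law of an i.i.d. sequence of exponential random variables of
parameter `1`, characterized by its joint survival function. -/
def IsIIDExp (ν : Measure (ℕ → ℝ)) : Prop :=
  IsProbabilityMeasure ν ∧
  ∀ (n : ℕ) (s : ℕ → ℝ), (∀ k, 0 ≤ s k) →
    ν {g | ∀ k, k ≤ n → s k < g k} =
      ENNReal.ofReal (Real.exp (-(∑ k ∈ Finset.range (n + 1), s k)))

/-- `P` is the law of the continuous-time simple random walk `Y_t = X_{N_t}`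
with initial distribution `init`. -/
def IsCTWalk {d N : ℕ} (P : Measure (CTPath d N)) (init : Torus d N → ℝ≥0∞) : Prop :=
  ∃ (μ : Measure (ℕ → Torus d N)) (ν : Measure (ℕ → ℝ)),
    IsWalkLaw μ init ∧ IsIIDExp ν ∧ P = μ.prod ν

/-- The entrance time `H_V = inf {t ≥ 0 : Y_t ∈ V}`. -/
def hitT {d N : ℕ} (V : Set (Torus d N)) (ω : CTPath d N) : ℝ :=
  sInf {t | 0 ≤ t ∧ ctPos ω t ∈ V}

/-- The entrance time to `V` after time `s`. -/
def hitTAfter {d N : ℕ} (V : Set (Torus d N)) (ω : CTPath d N) (s : ℝ) : ℝ :=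
  sInf {t | s ≤ t ∧ ctPos ω t ∈ V}

/-- The exit time `T_V = inf {t ≥ 0 : Y_t ∉ V}`. -/
def exitT {d N : ℕ} (V : Set (Torus d N)) (ω : CTPath d N) : ℝ :=
  sInf {t | 0 ≤ t ∧ ctPos ω t ∉ V}

/-- The regeneration time `t_* = (N log N)^2`. -/
def tstar (N : ℕ) : ℝ := ((N : ℝ) * Real.log N) ^ 2

/-- The first time `t ≥ s + t_*` such that the walk has avoided `B` during the
whole interval `[t − t_*, t]`. -/
def uEndAfter {d N : ℕ} (B : Set (Torus d N)) (ω : CTPath d N) (s : ℝ) : ℝ :=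
  sInf {t | s + tstar N ≤ t ∧ ∀ r, t - tstar N ≤ r → r ≤ t → ctPos ω r ∉ B}

/-- The successive excursion times `(R_k, U_k)` between `A` and (long absences
from) `B`, with the convention `(R_0, U_0) = (0, 0)`. -/
def excTimes {d N : ℕ} (A B : Set (Torus d N)) (ω : CTPath d N) : ℕ → ℝ × ℝ
  | 0 => (0, 0)
  | k + 1 =>
      let R := hitTAfter A ω (excTimes A B ω k).2
      (R, uEndAfter B ω R)

/-- The range of the continuous-time walk during the time interval `[a, b]`. -/
def ctRange {d N : ℕ} (ω : CTPath d N) (a b : ℝ) : Set (Torus d N) :=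
  {v | ∃ t, a ≤ t ∧ t ≤ b ∧ ctPos ω t = v}

/-! ### The killed walk and the quasistationary distribution -/

/-- The action of the substochastic matrix `P^B` (walk killed on `B`) on a
vector `v`. -/
def killedMul (d N : ℕ) (B : Set (Torus d N)) (v : Torus d N → ℝ) (x : Torus d N) : ℝ :=
  ∑ᶠ y : Torus d N, if y ∉ B ∧ adj x y then v y / (2 * d) else 0

/-- `l` is an eigenvalue of the killed transition matrix `P^B`. -/
def IsKilledEigenvalue (d N : ℕ) (B : Set (Torus d N)) (l : ℝ) : Prop :=
  ∃ v : Torus d N → ℝ, v ≠ 0 ∧ (∀ x ∈ B, v x = 0) ∧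
    ∀ x, x ∉ B → killedMul d N B v x = l * v x

/-- `σ` is the quasistationary distribution on `T ∖ B`: the normalized
non-negative principal (Perron–Frobenius) eigenvector of `P^B`. -/
def IsQSD (d N : ℕ) (B : Set (Torus d N)) (σ : Torus d N → ℝ) : Prop :=
  (∀ x, 0 ≤ σ x) ∧ (∀ x ∈ B, σ x = 0) ∧ (∑ᶠ x, σ x = 1) ∧
  ∃ l : ℝ, (∀ x, x ∉ B → killedMul d N B σ x = l * σ x) ∧
    ∀ l', IsKilledEigenvalue d N B l' → l' ≤ l

/-- The Dirichlet form of the simple random walk on the torus. -/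
def dirichlet (d N : ℕ) (g : Torus d N → ℝ) : ℝ :=
  (1 / 2) * ∑ᶠ x : Torus d N, ∑ᶠ y : Torus d N,
    if adj x y then (g x - g y) ^ 2 / (2 * d * (N : ℝ) ^ d) else 0

end Frag

namespace Frag

/-!
On `ℤ^d` with `d ≥ 3` the function `|y|^{-1/2}` is superharmonic away from `0`, so it gives a walk
started at distance `L` a probability of order `√(R / L)` of ever reaching distance `R` from `0`.
On the torus we take `u^{-1/4}`, where `u` is a trigonometric polynomial comparable to
`1 + |y|²`. Superharmonicity then fails only at distances of order `N`, by at most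
`7 / (N² √N)` per step: over the time `t_* = (N log N)²` the defect adds up to
`O(log² N / √N)`, and inside `B(0, N/4)` it is absorbed by a multiple of the strictly superharmonic
function `N² - y_i²`, so that no time bound is needed. The jump times have exponential moments, so
the continuous-time walk makes at most `10 t` jumps by time `t` up to probability `exp (-t)`.
-/

/-! ### Lyapunov functions for Markov chains -/

section MarkovChain

variable {α : Type*}

/-- `μ` is the law on path space of the Markov chain with initial weights `init` and transition
weights `p`, characterized by its cylinder probabilities. -/
def IsMarkovLaw [MeasurableSpace α] (μ : Measure (ℕ → α)) (init : α → ℝ≥0∞)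
    (p : α → α → ℝ≥0∞) : Prop :=
  ∀ (n : ℕ) (w : ℕ → α),
    μ {ω | ∀ k ≤ n, ω k = w k} = init (w 0) * ∏ k ∈ Finset.range n, p (w k) (w (k + 1))

/-- The transition operator of the Markov chain with transition weights `p`. -/
def transition (p : α → α → ℝ≥0∞) (f : α → ℝ≥0∞) (y : α) : ℝ≥0∞ := ∑' z, p y z * f z

/-- The event that the path stays in `S` at all times strictly before `n`. -/
def staysBefore (S : Set α) (n : ℕ) : Set (ℕ → α) := {ω | ∀ j < n, ω j ∈ S}

@[simp]
lemma staysBefore_zero (S : Set α) : staysBefore S 0 = Set.univ := by simp [staysBefore]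

lemma staysBefore_succ (S : Set α) (n : ℕ) :
    staysBefore S (n + 1) = staysBefore S n ∩ (fun ω => ω n) ⁻¹' S := by
  ext ω
  simp only [staysBefore, Nat.forall_lt_succ_right, Set.mem_inter_iff, Set.mem_preimage,
    Set.mem_ofPred_eq]

variable [MeasurableSpace α] {μ : Measure (ℕ → α)} {init : α → ℝ≥0∞} {p : α → α → ℝ≥0∞}

lemma IsMarkovLaw.measure_initial_segment (hμ : IsMarkovLaw μ init p) {n : ℕ}
    (w : Fin (n + 1) → α) :
    μ ((fun ω (i : Fin (n + 1)) => ω i) ⁻¹' {w}) =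
      init (w 0) * ∏ i : Fin n, p (w i.castSucc) (w i.succ) := by
  let v : ℕ → α := fun k => w (Fin.ofNat (n + 1) k)
  have hv (i : Fin (n + 1)) : v i = w i := congrArg w (Fin.ofNat_val_eq_self i)
  have hcyl : (fun (ω : ℕ → α) (i : Fin (n + 1)) => ω i) ⁻¹' {w} = {ω | ∀ k ≤ n, ω k = v k} := by
    ext ω
    simp only [Set.mem_preimage, Set.mem_singleton_iff, funext_iff, Set.mem_ofPred_eq, ← hv,
      Fin.forall_iff, Nat.lt_succ_iff]
  rw [hcyl, hμ, Finset.prod_range]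
  simp only [← hv, Fin.val_zero, Fin.val_castSucc, Fin.val_succ]

variable [Countable α] [MeasurableSingletonClass α]

lemma measurable_eval_comp {β : Type*} [MeasurableSpace β] (f : α → β) (n : ℕ) :
    Measurable fun ω : ℕ → α => f (ω n) :=
  (measurable_of_countable f).comp (measurable_pi_apply n)

lemma measurableSet_staysBefore (S : Set α) (n : ℕ) : MeasurableSet (staysBefore S n) := by
  induction n with
  | zero => simp
  | succ n ih =>
    rw [staysBefore_succ]
    exact ih.inter (measurable_pi_apply n S.to_countable.measurableSet)

lemma IsMarkovLaw.lintegral_initial_segment (hμ : IsMarkovLaw μ init p) {n : ℕ}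
    (h : (Fin (n + 1) → α) → ℝ≥0∞) :
    ∫⁻ ω, h (fun i => ω i) ∂μ =
      ∑' w : Fin (n + 1) → α, h w * (init (w 0) * ∏ i : Fin n, p (w i.castSucc) (w i.succ)) := by
  have hseg : Measurable fun (ω : ℕ → α) (i : Fin (n + 1)) => ω i :=
    measurable_pi_lambda _ fun i => measurable_pi_apply _
  rw [← lintegral_map (measurable_of_countable h) hseg, lintegral_countable']
  simp_rw [Measure.map_apply hseg (measurableSet_singleton _), hμ.measure_initial_segment]

lemma IsMarkovLaw.lintegral_mul_next (hμ : IsMarkovLaw μ init p) {n : ℕ}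
    (h : (Fin (n + 1) → α) → ℝ≥0∞) (f : α → ℝ≥0∞) :
    ∫⁻ ω, h (fun i => ω i) * f (ω (n + 1)) ∂μ =
      ∫⁻ ω, h (fun i => ω i) * transition p f (ω n) ∂μ := by
  have hnext := hμ.lintegral_initial_segment (n := n + 1)
    fun w => h (fun i => w i.castSucc) * f (w (Fin.last (n + 1)))
  have hnow := hμ.lintegral_initial_segment
    fun w : Fin (n + 1) → α => h w * transition p f (w (Fin.last n))
  simp only [Fin.val_castSucc, Fin.val_last] at hnext hnow
  rw [hnext, hnow, ← (Fin.snocEquiv fun _ : Fin (n + 2) => α).tsum_eq, ENNReal.tsum_prod',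
    ENNReal.tsum_comm]
  refine tsum_congr fun w => ?_
  simp only [Fin.snocEquiv, Equiv.coe_fn_mk, Fin.snoc_castSucc, Fin.snoc_last,
    Fin.prod_univ_castSucc (n := n), ← Fin.castSucc_zero (n := n + 1), Fin.succ_castSucc,
    Fin.succ_last, transition, ← ENNReal.tsum_mul_left, ← ENNReal.tsum_mul_right]
  exact tsum_congr fun z => by ring

lemma IsMarkovLaw.setLIntegral_staysBefore_succ (hμ : IsMarkovLaw μ init p) (S : Set α)
    (f : α → ℝ≥0∞) (n : ℕ) :
    ∫⁻ ω in staysBefore S (n + 1), f (ω (n + 1)) ∂μ =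
      ∫⁻ ω in staysBefore S n, S.indicator (transition p f) (ω n) ∂μ := by
  let h : (Fin (n + 1) → α) → ℝ≥0∞ := {w | ∀ i, w i ∈ S}.indicator 1
  have hstay (F : (ℕ → α) → ℝ≥0∞) :
      ∫⁻ ω in staysBefore S (n + 1), F ω ∂μ = ∫⁻ ω, h (fun i => ω i) * F ω ∂μ := by
    rw [← lintegral_indicator (measurableSet_staysBefore S _)]
    simp only [h, staysBefore, Set.indicator_apply, Set.mem_ofPred_eq, Fin.forall_iff,
      Pi.one_apply, ite_mul, one_mul, zero_mul]
  have hS : MeasurableSet ((fun ω : ℕ → α => ω n) ⁻¹' S) :=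
    measurable_pi_apply n S.to_countable.measurableSet
  rw [hstay, hμ.lintegral_mul_next h f, ← hstay, staysBefore_succ, Set.inter_comm,
    ← setLIntegral_indicator hS]
  rfl

lemma setLIntegral_staysBefore_indicator_const (S D : Set α) (c : ℝ≥0∞) (n : ℕ) :
    ∫⁻ ω in staysBefore S n, D.indicator (fun _ => c) (ω n) ∂μ =
      c * μ {ω | ω ∈ staysBefore S n ∧ ω n ∈ D} := by
  have hD : MeasurableSet {ω : ℕ → α | ω n ∈ D} :=
    measurable_pi_apply n D.to_countable.measurableSet
  rw [Set.ofPred_and, Set.ofPred_mem_eq, Set.inter_comm, ← Measure.restrict_apply hD,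
    ← lintegral_indicator_const hD]
  rfl

variable [IsProbabilityMeasure μ] {S : Set α} {f g : α → ℝ≥0∞} {δ : ℝ≥0∞}

/-- The supermartingale inequality for the chain stopped on leaving `S`, in which `g` is the reward
collected while running and `δ` bounds the gain of `f` per step. -/
lemma IsMarkovLaw.sum_setLIntegral_staysBefore_le (hμ : IsMarkovLaw μ init p)
    (hdrift : ∀ y, S.indicator (transition p f) y + g y ≤ f y + δ) (n : ℕ) :
    ∑ k ∈ Finset.range n, ∫⁻ ω in staysBefore S k, g (ω k) ∂μ ≤ ∫⁻ ω, f (ω 0) ∂μ + n * δ := by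
  suffices ∫⁻ ω in staysBefore S n, f (ω n) ∂μ +
      ∑ k ∈ Finset.range n, ∫⁻ ω in staysBefore S k, g (ω k) ∂μ ≤ ∫⁻ ω, f (ω 0) ∂μ + n * δ from
    le_add_self.trans this
  induction n with
  | zero => simp
  | succ n ih =>
    have hstep : ∫⁻ ω in staysBefore S (n + 1), f (ω (n + 1)) ∂μ +
        ∫⁻ ω in staysBefore S n, g (ω n) ∂μ ≤ ∫⁻ ω in staysBefore S n, f (ω n) ∂μ + δ := by
      rw [hμ.setLIntegral_staysBefore_succ, ← lintegral_add_right _ (measurable_eval_comp g n)]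
      refine (lintegral_mono fun ω : ℕ → α => hdrift (ω n)).trans ?_
      rw [lintegral_add_right _ measurable_const, setLIntegral_const]
      gcongr
      exact mul_le_of_le_one_right' prob_le_one
    rw [Finset.sum_range_succ, Nat.cast_succ, add_one_mul]
    calc _ = (∫⁻ ω in staysBefore S (n + 1), f (ω (n + 1)) ∂μ +
            ∫⁻ ω in staysBefore S n, g (ω n) ∂μ) +
            ∑ k ∈ Finset.range n, ∫⁻ ω in staysBefore S k, g (ω k) ∂μ := by ring
      _ ≤ (∫⁻ ω in staysBefore S n, f (ω n) ∂μ + δ) +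
            ∑ k ∈ Finset.range n, ∫⁻ ω in staysBefore S k, g (ω k) ∂μ := by gcongr
      _ = (∫⁻ ω in staysBefore S n, f (ω n) ∂μ +
            ∑ k ∈ Finset.range n, ∫⁻ ω in staysBefore S k, g (ω k) ∂μ) + δ := by ring
      _ ≤ ∫⁻ ω, f (ω 0) ∂μ + (n * δ + δ) := by rw [← add_assoc]; gcongr

lemma IsMarkovLaw.mul_measure_hit_before_le (hμ : IsMarkovLaw μ init p) {D : Set α}
    (hSD : Disjoint S D) {m : ℝ≥0∞} (hD : ∀ y ∈ D, m ≤ f y)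
    (hS : ∀ y ∈ S, transition p f y ≤ f y + δ) (n : ℕ) :
    m * μ {ω | ∃ k < n, ω ∈ staysBefore S k ∧ ω k ∈ D} ≤ ∫⁻ ω, f (ω 0) ∂μ + n * δ := by
  have hdrift y : S.indicator (transition p f) y + D.indicator (fun _ => m) y ≤ f y + δ := by
    by_cases hyS : y ∈ S
    · simpa [hyS, Set.disjoint_left.1 hSD hyS] using hS y hyS
    · by_cases hyD : y ∈ D
      · simpa [hyS, hyD] using (hD y hyD).trans le_self_add
      · simp [hyS, hyD]
  calc m * μ {ω | ∃ k < n, ω ∈ staysBefore S k ∧ ω k ∈ D}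
      ≤ m * ∑ k ∈ Finset.range n, μ {ω | ω ∈ staysBefore S k ∧ ω k ∈ D} := by
        gcongr
        refine (measure_mono ?_).trans (measure_biUnion_finset_le _ _)
        rintro ω ⟨k, hk, h⟩
        exact Set.mem_biUnion (Finset.mem_coe.2 (Finset.mem_range.2 hk)) h
    _ ≤ ∫⁻ ω, f (ω 0) ∂μ + n * δ := by
        rw [Finset.mul_sum]
        simpa only [setLIntegral_staysBefore_indicator_const] using
          hμ.sum_setLIntegral_staysBefore_le hdrift n

lemma IsMarkovLaw.mul_measure_hit_le (hμ : IsMarkovLaw μ init p) {D : Set α}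
    (hSD : Disjoint S D) {m : ℝ≥0∞} (hD : ∀ y ∈ D, m ≤ f y)
    (hS : ∀ y ∈ S, transition p f y ≤ f y) :
    m * μ {ω | ∃ k, ω ∈ staysBefore S k ∧ ω k ∈ D} ≤ ∫⁻ ω, f (ω 0) ∂μ := by
  have hmono : Monotone fun n => {ω : ℕ → α | ∃ k < n, ω ∈ staysBefore S k ∧ ω k ∈ D} :=
    fun a b hab ω ⟨k, hk, h⟩ => ⟨k, hk.trans_le hab, h⟩
  have hU : {ω : ℕ → α | ∃ k, ω ∈ staysBefore S k ∧ ω k ∈ D} =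
      ⋃ n, {ω | ∃ k < n, ω ∈ staysBefore S k ∧ ω k ∈ D} := by
    ext ω
    simp only [Set.mem_iUnion, Set.mem_ofPred_eq]
    exact ⟨fun ⟨k, h⟩ => ⟨k + 1, k, k.lt_succ_self, h⟩, fun ⟨_, k, _, h⟩ => ⟨k, h⟩⟩
  rw [hU, hmono.measure_iUnion, ENNReal.mul_iSup]
  exact iSup_le fun n => by
    simpa using hμ.mul_measure_hit_before_le (δ := 0) hSD hD (by simpa using hS) n

lemma IsMarkovLaw.measure_forall_mem_eq_zero (hμ : IsMarkovLaw μ init p)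
    (hf : ∫⁻ ω, f (ω 0) ∂μ ≠ ∞) {η : ℝ≥0∞} (hη : η ≠ 0)
    (hS : ∀ y ∈ S, transition p f y + η ≤ f y) :
    μ {ω | ∀ j, ω j ∈ S} = 0 := by
  have hdrift y : S.indicator (transition p f) y + S.indicator (fun _ => η) y ≤ f y + 0 := by
    by_cases hy : y ∈ S
    · simpa [hy] using hS y hy
    · simp [hy]
  have hbound (n : ℕ) : n * (η * μ {ω | ∀ j, ω j ∈ S}) ≤ ∫⁻ ω, f (ω 0) ∂μ :=
    calc n * (η * μ {ω | ∀ j, ω j ∈ S})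
        = ∑ _k ∈ Finset.range n, η * μ {ω | ∀ j, ω j ∈ S} := by simp
      _ ≤ ∑ k ∈ Finset.range n, η * μ {ω | ω ∈ staysBefore S k ∧ ω k ∈ S} := by
        gcongr
        exact fun h => ⟨fun j _ => h j, h _⟩
      _ ≤ ∫⁻ ω, f (ω 0) ∂μ := by
        simpa only [setLIntegral_staysBefore_indicator_const, mul_zero, add_zero] using
          hμ.sum_setLIntegral_staysBefore_le hdrift n
  by_contra hne
  obtain ⟨n, hn⟩ := ENNReal.exists_nat_mul_gt (mul_ne_zero hη hne) hf
  exact (hbound n).not_gt hn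

end MarkovChain

/-! ### Lyapunov functions for the walk on the torus -/

section TorusWalk

instance (n : ℕ) : DiscreteMeasurableSpace (ZMod n) := ⟨fun _ => trivial⟩

variable {d N : ℕ}

/-- The average of `f` over the `2d` neighbours of `y`. -/
def nbrAvg (f : Torus d N → ℝ) (y : Torus d N) : ℝ :=
  (∑ i, (f (y + Pi.single i 1) + f (y - Pi.single i 1))) / (2 * d)

lemma exists_eq_add_or_sub_single_of_adj {y z : Torus d N} (h : adj y z) :
    ∃ i, z = y + Pi.single i 1 ∨ z = y - Pi.single i 1 := by
  obtain ⟨-, i, hi, hj⟩ := h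
  refine ⟨i, hi.imp (fun hi => ?_) (fun hi => ?_)⟩ <;>
  · ext j
    rcases eq_or_ne j i with rfl | hji
    · simp [hi]
    · simp [hji, hj j hji]

lemma IsWalkLaw.isMarkovLaw {μ : Measure (ℕ → Torus d N)} {init : Torus d N → ℝ≥0∞}
    (hμ : IsWalkLaw μ init) : IsMarkovLaw μ init srwStep := hμ.2

variable [NeZero N]

/-- Only an inequality, since `y + eᵢ` and `y - eᵢ` coincide when `N = 2`. -/
lemma transition_srwStep_le {f : Torus d N → ℝ} (hf : ∀ y, 0 ≤ f y) (y : Torus d N) :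
    transition srwStep (fun z => .ofReal (f z)) y ≤ .ofReal (nbrAvg f y) := by
  let c : ℝ≥0∞ := ((2 * d : ℕ) : ℝ≥0∞)⁻¹
  have hstep (z : Torus d N) : srwStep y z * .ofReal (f z) ≤
      ∑ i, ((if z = y + Pi.single i 1 then c * .ofReal (f z) else 0) +
        if z = y - Pi.single i 1 then c * .ofReal (f z) else 0) := by
    by_cases h : adj y z
    · obtain ⟨i, hi⟩ := exists_eq_add_or_sub_single_of_adj h
      refine le_trans ?_ (Finset.single_le_sum (fun _ _ => zero_le) (Finset.mem_univ i))
      rcases hi with hi | hi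
      · simp [srwStep, h, ← hi, c]
      · simp [srwStep, h, ← hi, c]
    · simp [srwStep, h]
  calc transition srwStep (fun z => .ofReal (f z)) y
      ≤ ∑ z, ∑ i, ((if z = y + Pi.single i 1 then c * .ofReal (f z) else 0) +
        if z = y - Pi.single i 1 then c * .ofReal (f z) else 0) := by
        rw [transition, tsum_fintype]
        exact Finset.sum_le_sum fun z _ => hstep z
    _ = c * ∑ i, (.ofReal (f (y + Pi.single i 1)) + .ofReal (f (y - Pi.single i 1))) := by
        rw [Finset.sum_comm, Finset.mul_sum]
        simp only [Finset.sum_add_distrib, Finset.sum_ite_eq', Finset.mem_univ, if_true, mul_add]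
    _ = .ofReal (nbrAvg f y) := by
        rcases d.eq_zero_or_pos with rfl | hd
        · simp [nbrAvg]
        have hc : .ofReal ((2 * d : ℝ)⁻¹) = c := by
          rw [ENNReal.ofReal_inv_of_pos (by positivity)]
          exact_mod_cast congrArg _ (ENNReal.ofReal_natCast (2 * d))
        rw [nbrAvg, div_eq_inv_mul, ENNReal.ofReal_mul (by positivity), hc,
          ENNReal.ofReal_sum_of_nonneg fun i _ => add_nonneg (hf _) (hf _)]
        simp only [ENNReal.ofReal_add (hf _) (hf _)]

variable {μ : Measure (ℕ → Torus d N)} {x : Torus d N}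

lemma IsWalkLaw.ae_eval_zero_eq (hμ : IsWalkLaw μ (pointInit x)) : ∀ᵐ ω ∂μ, ω 0 = x := by
  have := hμ.1
  have hmeas : MeasurableSet {ω : ℕ → Torus d N | ω 0 = x} :=
    measurableSet_eq_fun (measurable_pi_apply 0) measurable_const
  refine (mem_ae_iff_prob_eq_one hmeas).2 ?_
  simpa [pointInit] using hμ.2 0 fun _ => x

lemma IsWalkLaw.lintegral_eval_zero (hμ : IsWalkLaw μ (pointInit x)) (f : Torus d N → ℝ≥0∞) :
    ∫⁻ ω, f (ω 0) ∂μ = f x := by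
  have := hμ.1
  rw [lintegral_congr_ae (hμ.ae_eval_zero_eq.mono fun ω hω => congrArg f hω)]
  simp

section HittingBounds

variable {S D : Set (Torus d N)} {f : Torus d N → ℝ} {m δ : ℝ}

lemma IsWalkLaw.measureReal_hit_before_le (hμ : IsWalkLaw μ (pointInit x)) (hSD : Disjoint S D)
    (hf : ∀ y, 0 ≤ f y) (hm : 0 < m) (hδ : 0 ≤ δ) (hD : ∀ y ∈ D, m ≤ f y)
    (hS : ∀ y ∈ S, nbrAvg f y ≤ f y + δ) (n : ℕ) :
    μ.real {ω | ∃ k < n, ω ∈ staysBefore S k ∧ ω k ∈ D} ≤ (f x + n * δ) / m := by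
  have := hμ.1
  have hbound := hμ.isMarkovLaw.mul_measure_hit_before_le (f := fun z => .ofReal (f z))
    (δ := .ofReal δ) hSD (fun y hy => ENNReal.ofReal_le_ofReal (hD y hy))
    (fun y hy => (transition_srwStep_le hf y).trans
      ((ENNReal.ofReal_le_ofReal (hS y hy)).trans ENNReal.ofReal_add_le)) n
  rw [hμ.lintegral_eval_zero fun z => .ofReal (f z), ← ENNReal.ofReal_natCast,
    ← ENNReal.ofReal_mul n.cast_nonneg, ← ENNReal.ofReal_add (hf x) (by positivity)] at hbound
  rw [le_div_iff₀ hm, mul_comm]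
  simpa [hm.le, measureReal_def] using
    ENNReal.toReal_le_of_le_ofReal (by have := hf x; positivity) hbound

lemma IsWalkLaw.measureReal_hit_le (hμ : IsWalkLaw μ (pointInit x)) (hSD : Disjoint S D)
    (hf : ∀ y, 0 ≤ f y) (hm : 0 < m) (hD : ∀ y ∈ D, m ≤ f y)
    (hS : ∀ y ∈ S, nbrAvg f y ≤ f y) :
    μ.real {ω | ∃ k, ω ∈ staysBefore S k ∧ ω k ∈ D} ≤ f x / m := by
  have := hμ.1
  have hbound := hμ.isMarkovLaw.mul_measure_hit_le (f := fun z => .ofReal (f z)) hSD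
    (fun y hy => ENNReal.ofReal_le_ofReal (hD y hy))
    (fun y hy => (transition_srwStep_le hf y).trans (ENNReal.ofReal_le_ofReal (hS y hy)))
  rw [hμ.lintegral_eval_zero fun z => .ofReal (f z)] at hbound
  rw [le_div_iff₀ hm, mul_comm]
  simpa [hm.le, measureReal_def] using
    ENNReal.toReal_le_of_le_ofReal (hf x) hbound

lemma IsWalkLaw.ae_exists_notMem (hμ : IsWalkLaw μ (pointInit x)) {η : ℝ} (hf : ∀ y, 0 ≤ f y)
    (hη : 0 < η) (hS : ∀ y ∈ S, nbrAvg f y ≤ f y - η) : ∀ᵐ ω ∂μ, ∃ j, ω j ∉ S := by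
  have := hμ.1
  have hdrift : ∀ y ∈ S, transition srwStep (fun z => .ofReal (f z)) y + .ofReal η ≤
      .ofReal (f y) := fun y hy => by
    have hnonneg : 0 ≤ nbrAvg f y :=
      div_nonneg (Finset.sum_nonneg fun i _ => add_nonneg (hf _) (hf _)) (by positivity)
    calc transition srwStep (fun z => .ofReal (f z)) y + .ofReal η
        ≤ .ofReal (nbrAvg f y) + .ofReal η := by gcongr; exact transition_srwStep_le hf y
      _ = .ofReal (nbrAvg f y + η) := (ENNReal.ofReal_add hnonneg hη.le).symm
      _ ≤ .ofReal (f y) := ENNReal.ofReal_le_ofReal (by linarith [hS y hy])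
  have hfin : ∫⁻ ω, .ofReal (f (ω 0)) ∂μ ≠ ∞ := by
    rw [hμ.lintegral_eval_zero fun z => .ofReal (f z)]; exact ENNReal.ofReal_ne_top
  rw [ae_iff]
  simpa using hμ.isMarkovLaw.measure_forall_mem_eq_zero hfin (by simpa using hη) hdrift

end HittingBounds

lemma sum_val_sub_single {y : Torus d N} {i : Fin d} (hi : y i ≠ 0) :
    ∑ j, ((y - Pi.single i 1 : Torus d N) j).val + 1 = ∑ j, (y j).val := by
  have hyi : ((y - Pi.single i 1 : Torus d N) i).val + 1 = (y i).val := by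
    have hN : N ≠ 1 := by rintro rfl; exact hi (Subsingleton.elim _ _)
    have hone : (1 : ZMod N).val = 1 := ZMod.val_one'' hN
    have hpos : 1 ≤ (y i).val := Nat.one_le_iff_ne_zero.2 ((ZMod.val_ne_zero _).2 hi)
    rw [Pi.sub_apply, Pi.single_eq_same, ZMod.val_sub (hone.trans_le hpos), hone,
      Nat.sub_add_cancel hpos]
  rw [← Finset.add_sum_erase _ _ (Finset.mem_univ i),
    ← Finset.add_sum_erase _ (fun j => (y j).val) (Finset.mem_univ i), ← hyi, add_right_comm]
  congr 1
  refine Finset.sum_congr rfl fun j hj => ?_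
  simp [Finset.ne_of_mem_erase hj]

/-- One neighbour of `y ≠ 0` has a smaller coordinate sum, and `β` is so small that this neighbour
outweighs all the others. -/
lemma nbrAvg_one_sub_pow_sum_val_le {y : Torus d N} (hy : y ≠ 0) :
    nbrAvg (fun z => 1 - (4 * d + 1 : ℝ)⁻¹ ^ ∑ i, (z i).val) y ≤
      1 - (4 * d + 1 : ℝ)⁻¹ ^ ∑ i, (y i).val - (4 * d + 1 : ℝ)⁻¹ ^ (d * N) := by
  let β : ℝ := (4 * d + 1)⁻¹
  let s : Torus d N → ℕ := fun z => ∑ i, (z i).val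
  change nbrAvg (fun z => 1 - β ^ s z) y ≤ 1 - β ^ s y - β ^ (d * N)
  obtain ⟨i, hi⟩ : ∃ i, y i ≠ 0 := Function.ne_iff.1 hy
  have hd : (0 : ℝ) < d := by exact_mod_cast i.pos
  have hβ : 0 < β := by positivity
  have hβ_le : β ≤ 1 := inv_le_one_of_one_le₀ (by linarith)
  have hs : s y ≤ d * N :=
    (Finset.sum_le_sum fun i _ => (ZMod.val_lt (y i)).le).trans (by simp)
  have hnbr : β ^ s (y - Pi.single i 1) = (4 * d + 1) * β ^ s y := by
    have hsucc : s y = s (y - Pi.single i 1) + 1 := (sum_val_sub_single hi).symm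
    rw [hsucc, pow_succ]
    simp only [β]
    field_simp
  have hsum : ∑ j, ((1 - β ^ s (y + Pi.single j 1)) + (1 - β ^ s (y - Pi.single j 1))) ≤
      ∑ j, (2 - if j = i then β ^ s (y - Pi.single i 1) else 0) := by
    refine Finset.sum_le_sum fun j _ => ?_
    have hplus : 0 ≤ β ^ s (y + Pi.single j 1) := by positivity
    have hminus : 0 ≤ β ^ s (y - Pi.single j 1) := by positivity
    split_ifs with hji
    · subst hji; linarith
    · linarith
  rw [nbrAvg, div_le_iff₀ (by positivity)]
  have hpow : β ^ (d * N) ≤ β ^ s y := pow_le_pow_of_le_one hβ.le hβ_le hs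
  rw [Finset.sum_sub_distrib, Finset.sum_ite_eq' Finset.univ i, if_pos (Finset.mem_univ i), hnbr,
    Finset.sum_const, Finset.card_univ, Fintype.card_fin, nsmul_eq_mul] at hsum
  nlinarith [pow_pos hβ (s y)]

lemma IsWalkLaw.ae_exists_eq_zero (hμ : IsWalkLaw μ (pointInit x)) : ∀ᵐ ω ∂μ, ∃ j, ω j = 0 := by
  have hβ : (4 * d + 1 : ℝ)⁻¹ ≤ 1 := inv_le_one_of_one_le₀ (by linarith [d.cast_nonneg (α := ℝ)])
  have := hμ.ae_exists_notMem (S := {0}ᶜ) (η := (4 * d + 1 : ℝ)⁻¹ ^ (d * N))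
    (fun y => sub_nonneg.2 (pow_le_one₀ (by positivity) hβ)) (by positivity)
    fun y hy => nbrAvg_one_sub_pow_sum_val_le hy
  simpa using this

end TorusWalk

/-! ### Jump times -/

section JumpTimes

open ProbabilityTheory

/-- The time of the `n`-th jump of the walk with interarrival gaps `g`. -/
def jumpTime (g : ℕ → ℝ) (n : ℕ) : ℝ := ∑ k ∈ Finset.range n, g k

section Law

variable {ν : Measure (ℕ → ℝ)}

lemma measurableSet_lt_gap (a : ℝ) (k : ℕ) : MeasurableSet {g : ℕ → ℝ | a < g k} :=
  measurableSet_lt measurable_const (measurable_pi_apply k)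

lemma IsIIDExp.ae_forall_pos (hν : IsIIDExp ν) : ∀ᵐ g ∂ν, ∀ k, 0 < g k := by
  have := hν.1
  refine ae_all_iff.2 fun k => (mem_ae_iff_prob_eq_one (measurableSet_lt_gap 0 k)).2 ?_
  refine le_antisymm prob_le_one ?_
  calc (1 : ℝ≥0∞) = ν {g | ∀ j, j ≤ k → 0 < g j} := by
        simpa using (hν.2 k (fun _ => 0) fun _ => le_rfl).symm
    _ ≤ ν {g | 0 < g k} := measure_mono fun g hg => hg k le_rfl

lemma IsIIDExp.measure_biInter_one_lt (hν : IsIIDExp ν) (J : Finset ℕ) :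
    ν (⋂ k ∈ J, {g | 1 < g k}) = .ofReal (Real.exp (-J.card)) := by
  obtain ⟨n, hn⟩ := J.exists_nat_subset_range
  have hJ : (Finset.range (n + 1)).filter (· ∈ J) = J := by
    rw [Finset.filter_mem_eq_inter, Finset.inter_eq_right]
    exact hn.trans (Finset.range_subset_range.2 n.le_succ)
  have hcyl := hν.2 n (fun k => if k ∈ J then 1 else 0) fun k => by split_ifs <;> norm_num
  rw [Finset.sum_boole, hJ] at hcyl
  rw [← hcyl]
  have hset : (⋂ k ∈ J, {g : ℕ → ℝ | 1 < g k}) = {g | ∀ k ∈ J, 1 < g k} := by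
    ext g
    simp only [Set.mem_iInter, Set.mem_ofPred_eq]
  rw [hset]
  refine measure_congr (hν.ae_forall_pos.mono fun g hg => propext
    ⟨fun h k _ => ?_, fun h k hk => ?_⟩)
  · split_ifs with hk
    exacts [h k hk, hg k]
  · simpa [hk] using h k (Finset.mem_range.1 (hn hk)).le

lemma IsIIDExp.iIndepSet_one_lt (hν : IsIIDExp ν) : iIndepSet (fun k => {g | 1 < g k}) ν := by
  refine (iIndepSet_iff_meas_biInter (measurableSet_lt_gap 1)).2 fun J => ?_
  have hsingle (k : ℕ) : ν {g | 1 < g k} = .ofReal (Real.exp (-1)) := by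
    simpa using hν.measure_biInter_one_lt {k}
  simp only [hsingle, Finset.prod_const, hν.measure_biInter_one_lt,
    ← ENNReal.ofReal_pow (Real.exp_pos _).le, ← Real.exp_nat_mul]
  ring_nf

/-- The indicator of the event that the `k`-th gap exceeds `1`. -/
def longGap (k : ℕ) : (ℕ → ℝ) → ℝ := {g | 1 < g k}.indicator fun _ => 1

lemma measurable_longGap (k : ℕ) : Measurable (longGap k) :=
  measurable_const.indicator (measurableSet_lt_gap 1 k)

lemma longGap_le {g : ℕ → ℝ} {k : ℕ} (hg : 0 ≤ g k) : longGap k g ≤ g k :=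
  Set.indicator_apply_le' (fun (h : 1 < g k) => h.le) fun _ => hg

lemma IsIIDExp.iIndepFun_longGap (hν : IsIIDExp ν) : iIndepFun longGap ν :=
  hν.iIndepSet_one_lt.iIndepFun_indicator

lemma IsIIDExp.mgf_longGap_neg_one_le (hν : IsIIDExp ν) (k : ℕ) :
    mgf (longGap k) ν (-1) ≤ Real.exp (-(1 / 5)) := by
  have := hν.1
  have hprob : ν.real {g | 1 < g k} = Real.exp (-1) := by
    simpa [measureReal_def, Real.exp_nonneg] using
      congrArg ENNReal.toReal (hν.measure_biInter_one_lt {k})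
  have hexp (g : ℕ → ℝ) :
      Real.exp (-1 * longGap k g) = 1 - (1 - Real.exp (-1)) * longGap k g := by
    by_cases hg : 1 < g k <;> simp [longGap, Set.indicator, hg]
  have hint : Integrable (longGap k) ν :=
    (integrable_const 1).indicator (measurableSet_lt_gap 1 k)
  have hmean : ∫ g, longGap k g ∂ν = Real.exp (-1) := by
    simp [longGap, integral_indicator (measurableSet_lt_gap 1 k), hprob]
  calc mgf (longGap k) ν (-1) = ∫ g, (1 - (1 - Real.exp (-1)) * longGap k g) ∂ν := by
        simp only [mgf, hexp]
    _ = 1 - (1 - Real.exp (-1)) * Real.exp (-1) := by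
        rw [integral_sub (integrable_const _) (hint.const_mul _), integral_const_mul, hmean]
        simp
    _ ≤ -(1 / 5) + 1 := by nlinarith [Real.exp_neg_one_gt_d9, Real.exp_neg_one_lt_d9]
    _ ≤ Real.exp (-(1 / 5)) := Real.add_one_le_exp _

lemma IsIIDExp.measureReal_jumpTime_le (hν : IsIIDExp ν) (n : ℕ) (t : ℝ) :
    ν.real {g | jumpTime g n ≤ t} ≤ Real.exp (t - n / 5) := by
  have := hν.1
  let S : (ℕ → ℝ) → ℝ := ∑ k ∈ Finset.range n, longGap k
  have hS : Measurable S := by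
    simpa only [S, Finset.sum_fn] using
      Finset.measurable_sum (Finset.range n) fun k _ => measurable_longGap k
  have hS_nonneg (g : ℕ → ℝ) : 0 ≤ S g := by
    simp only [S, Finset.sum_apply]
    exact Finset.sum_nonneg fun k _ => Set.indicator_nonneg (fun _ _ => zero_le_one) g
  have hint : Integrable (fun g => Real.exp (-1 * S g)) ν :=
    .of_bound (by fun_prop) 1 <| .of_forall fun g => by
      simpa [abs_of_pos (Real.exp_pos _)] using hS_nonneg g
  have hle : {g | jumpTime g n ≤ t} ≤ᵐ[ν] {g | S g ≤ t} := by
    filter_upwards [hν.ae_forall_pos] with g hg hjump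
    refine le_trans ?_ hjump
    simpa [S, jumpTime] using Finset.sum_le_sum fun k _ => longGap_le (hg k).le
  calc ν.real {g | jumpTime g n ≤ t} ≤ ν.real {g | S g ≤ t} :=
        ENNReal.toReal_mono (measure_ne_top _ _) (measure_mono_ae hle)
    _ ≤ Real.exp (- -1 * t) * mgf S ν (-1) :=
        measure_le_le_exp_mul_mgf t (by norm_num) hint
    _ = Real.exp t * ∏ k ∈ Finset.range n, mgf (longGap k) ν (-1) := by
        rw [hν.iIndepFun_longGap.mgf_sum measurable_longGap, neg_neg, one_mul]
    _ ≤ Real.exp t * Real.exp (-(1 / 5)) ^ n := by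
        gcongr
        simpa using Finset.prod_le_prod (s := Finset.range n) (fun k _ => mgf_nonneg)
          fun k _ => hν.mgf_longGap_neg_one_le k
    _ = Real.exp (t - n / 5) := by
        rw [← Real.exp_nat_mul, ← Real.exp_add]
        ring_nf

lemma IsIIDExp.ae_strictMono_jumpTime (hν : IsIIDExp ν) : ∀ᵐ g ∂ν, StrictMono (jumpTime g) :=
  hν.ae_forall_pos.mono fun g hg =>
    strictMono_nat_of_lt_succ fun n => by simp [jumpTime, Finset.sum_range_succ, hg n]

lemma IsIIDExp.ae_tendsto_jumpTime (hν : IsIIDExp ν) :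
    ∀ᵐ g ∂ν, Tendsto (jumpTime g) atTop atTop := by
  have := hν.1
  have hunbounded (T : ℕ) : ∀ᵐ g ∂ν, ∃ n, T < jumpTime g n := by
    have hlim : Tendsto (fun n : ℕ => Real.exp (T - n / 5)) atTop (nhds 0) := by
      refine Real.tendsto_exp_atBot.comp (tendsto_atBot_add_const_left _ _ ?_)
      exact tendsto_neg_atTop_atBot.comp (tendsto_natCast_atTop_atTop.atTop_div_const (by norm_num))
    rw [ae_iff, ← measureReal_eq_zero_iff]
    refine le_antisymm (ge_of_tendsto' hlim fun n => ?_) measureReal_nonneg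
    refine (measureReal_mono fun g hg => ?_).trans (hν.measureReal_jumpTime_le n T)
    exact not_lt.1 (not_exists.1 hg n)
  filter_upwards [hν.ae_strictMono_jumpTime, ae_all_iff.2 hunbounded] with g hmono htop
  refine tendsto_atTop_atTop_of_monotone hmono.monotone fun b => ?_
  obtain ⟨T, hT⟩ := exists_nat_ge b
  exact (htop T).imp fun n hn => hT.trans hn.le

end Law

section EntranceTimes

variable {d N : ℕ} {g : ℕ → ℝ} {V : Set (Torus d N)} {ω : CTPath d N}

lemma nJumps_jumpTime (hg : StrictMono (jumpTime g)) (n : ℕ) : nJumps g (jumpTime g n) = n := by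
  have : {m | jumpTime g m ≤ jumpTime g n} = Set.Iic n := by
    ext m
    exact hg.le_iff_le
  rw [nJumps]
  change sSup {m | jumpTime g m ≤ jumpTime g n} = n
  rw [this, csSup_Iic]

lemma jumpTime_nJumps_le (hg : Tendsto (jumpTime g) atTop atTop) {t : ℝ} (ht : 0 ≤ t) :
    jumpTime g (nJumps g t) ≤ t := by
  obtain ⟨n, hn⟩ := eventually_atTop.1 (hg.eventually_gt_atTop t)
  exact Nat.sSup_mem (s := {m | jumpTime g m ≤ t}) ⟨0, by simpa [jumpTime] using ht⟩
    ⟨n, fun m hm => le_of_not_gt fun hnm => (hn m hnm.le).not_ge hm⟩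

lemma jumpTime_nonneg (hg : StrictMono (jumpTime g)) (n : ℕ) : 0 ≤ jumpTime g n := by
  simpa [jumpTime] using hg.monotone n.zero_le

lemma ctPos_jumpTime (hω : StrictMono (jumpTime ω.2)) (n : ℕ) :
    ctPos ω (jumpTime ω.2 n) = ω.1 n := by
  rw [ctPos, nJumps_jumpTime hω]

lemma exists_staysBefore_compl_jumpTime_le_hitT (hmono : StrictMono (jumpTime ω.2))
    (htop : Tendsto (jumpTime ω.2) atTop atTop) (hV : ∃ k, ω.1 k ∈ V) :
    ∃ k, ω.1 ∈ staysBefore Vᶜ k ∧ ω.1 k ∈ V ∧ jumpTime ω.2 k ≤ hitT V ω := by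
  refine ⟨Nat.find hV, fun j hj => Nat.find_min hV hj, Nat.find_spec hV, ?_⟩
  refine le_csInf ⟨jumpTime ω.2 (Nat.find hV), jumpTime_nonneg hmono _, ?_⟩ ?_
  · rw [ctPos_jumpTime hmono]
    exact Nat.find_spec hV
  · rintro t ⟨ht, htV⟩
    exact (hmono.monotone (Nat.find_min' hV htV)).trans (jumpTime_nJumps_le htop ht)

lemma exitT_le_jumpTime (hω : StrictMono (jumpTime ω.2)) {k : ℕ} (hk : ω.1 k ∉ V) :
    exitT V ω ≤ jumpTime ω.2 k :=
  csInf_le ⟨0, fun _ ht => ht.1⟩ ⟨jumpTime_nonneg hω k, by rwa [ctPos_jumpTime hω]⟩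

end EntranceTimes

section Transfer

variable {d N : ℕ} [NeZero N] {μ : Measure (ℕ → Torus d N)} {ν : Measure (ℕ → ℝ)} {x : Torus d N}

lemma ae_prod_exists_staysBefore_jumpTime_le_hitT (hμ : IsWalkLaw μ (pointInit x))
    (hν : IsIIDExp ν) {V : Set (Torus d N)} (hV : 0 ∈ V) :
    ∀ᵐ ω ∂μ.prod ν, StrictMono (jumpTime ω.2) ∧
      ∃ k, ω.1 ∈ staysBefore Vᶜ k ∧ ω.1 k ∈ V ∧ jumpTime ω.2 k ≤ hitT V ω := by
  have := hμ.1
  have := hν.1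
  filter_upwards [Measure.quasiMeasurePreserving_fst.ae hμ.ae_exists_eq_zero,
    Measure.quasiMeasurePreserving_snd.ae hν.ae_strictMono_jumpTime,
    Measure.quasiMeasurePreserving_snd.ae hν.ae_tendsto_jumpTime] with ω ⟨k, hk⟩ hmono htop
  exact ⟨hmono, exists_staysBefore_compl_jumpTime_le_hitT hmono htop ⟨k, hk ▸ hV⟩⟩

lemma measureReal_hitT_le (hμ : IsWalkLaw μ (pointInit x)) (hν : IsIIDExp ν)
    {V : Set (Torus d N)} (hV : 0 ∈ V) (t : ℝ) (n : ℕ) :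
    (μ.prod ν).real {ω | hitT V ω ≤ t} ≤
      μ.real {ω | ∃ k < n, ω ∈ staysBefore Vᶜ k ∧ ω k ∈ V} + ν.real {g | jumpTime g n ≤ t} := by
  have := hμ.1
  have := hν.1
  set E : Set (ℕ → Torus d N) := {ω | ∃ k < n, ω ∈ staysBefore Vᶜ k ∧ ω k ∈ V}
  set F : Set (ℕ → ℝ) := {g | jumpTime g n ≤ t}
  have hsub : {ω | hitT V ω ≤ t} ≤ᵐ[μ.prod ν] (E ×ˢ Set.univ ∪ Set.univ ×ˢ F : Set _) := by
    filter_upwards [ae_prod_exists_staysBefore_jumpTime_le_hitT hμ hν hV]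
      with ω ⟨hmono, k, hstay, hk, hle⟩ hhit
    rcases lt_or_ge k n with hkn | hnk
    · exact Or.inl ⟨⟨k, hkn, hstay, hk⟩, trivial⟩
    · exact Or.inr ⟨trivial, (hmono.monotone hnk).trans (hle.trans hhit)⟩
  calc (μ.prod ν).real {ω | hitT V ω ≤ t}
      ≤ (μ.prod ν).real (E ×ˢ Set.univ ∪ Set.univ ×ˢ F) :=
        ENNReal.toReal_mono (measure_ne_top _ _) (measure_mono_ae hsub)
    _ ≤ (μ.prod ν).real (E ×ˢ Set.univ) + (μ.prod ν).real (Set.univ ×ˢ F) :=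
        measureReal_union_le _ _
    _ = μ.real E + ν.real F := by simp [measureReal_prod_prod]

lemma measureReal_hitT_le_exitT_le (hμ : IsWalkLaw μ (pointInit x)) (hν : IsIIDExp ν)
    {A C : Set (Torus d N)} (hA : 0 ∈ A) :
    (μ.prod ν).real {ω | hitT A ω ≤ exitT C ω} ≤
      μ.real {ω | ∃ k, ω ∈ staysBefore (C \ A) k ∧ ω k ∈ A} := by
  have := hμ.1
  have := hν.1
  set E : Set (ℕ → Torus d N) := {ω | ∃ k, ω ∈ staysBefore (C \ A) k ∧ ω k ∈ A}
  have hsub : {ω | hitT A ω ≤ exitT C ω} ≤ᵐ[μ.prod ν] (E ×ˢ Set.univ : Set _) := by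
    filter_upwards [ae_prod_exists_staysBefore_jumpTime_le_hitT hμ hν hA]
      with ω ⟨hmono, k, hstay, hk, hle⟩ hhit
    refine ⟨⟨k, fun j hj => ⟨?_, hstay j hj⟩, hk⟩, trivial⟩
    by_contra hC
    exact (hmono hj).not_ge (hle.trans (hhit.trans (exitT_le_jumpTime hmono hC)))
  calc (μ.prod ν).real {ω | hitT A ω ≤ exitT C ω}
      ≤ (μ.prod ν).real (E ×ˢ Set.univ) :=
        ENNReal.toReal_mono (measure_ne_top _ _) (measure_mono_ae hsub)
    _ = μ.real E := by simp [measureReal_prod_prod]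

end Transfer

end JumpTimes

/-! ### A periodic substitute for the square of the distance -/

section PeriodicSquare

variable {N : ℕ}

lemma two_sub_two_mul_cos_le (t : ℝ) :
    2 - 2 * Real.cos (2 * Real.pi / N * t) ≤ 40 * t ^ 2 / N ^ 2 := by
  have hpi : Real.pi ^ 2 ≤ 10 := by nlinarith [Real.pi_pos, Real.pi_lt_d2]
  calc 2 - 2 * Real.cos (2 * Real.pi / N * t)
      ≤ (2 * Real.pi / N * t) ^ 2 := by
        linarith [Real.one_sub_sq_div_two_le_cos (x := 2 * Real.pi / N * t)]
    _ = 4 * Real.pi ^ 2 * t ^ 2 / N ^ 2 := by ring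
    _ ≤ 40 * t ^ 2 / N ^ 2 := by gcongr; linarith

lemma le_two_sub_two_mul_cos {t : ℝ} (ht : |t| ≤ N / 2) :
    16 * t ^ 2 / N ^ 2 ≤ 2 - 2 * Real.cos (2 * Real.pi / N * t) := by
  rcases N.eq_zero_or_pos with rfl | hN
  · simp
  have hangle : |2 * Real.pi / N * t| ≤ Real.pi := by
    rw [abs_mul, abs_of_nonneg (by positivity)]
    calc 2 * Real.pi / N * |t| ≤ 2 * Real.pi / N * (N / 2) := by gcongr
      _ = Real.pi := by field_simp
  calc 16 * t ^ 2 / N ^ 2 = 2 * (2 / Real.pi ^ 2 * (2 * Real.pi / N * t) ^ 2) := by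
        field_simp
        ring
    _ ≤ 2 - 2 * Real.cos (2 * Real.pi / N * t) := by
        linarith [Real.cos_le_one_sub_mul_cos_sq hangle]

/-- The smallest nonzero eigenvalue of the Laplacian of the cycle `ℤ/Nℤ`. -/
def cycleGap (N : ℕ) : ℝ := 2 - 2 * Real.cos (2 * Real.pi / N)

lemma cycleGap_le (N : ℕ) : cycleGap N ≤ 40 / N ^ 2 := by
  simpa [cycleGap] using two_sub_two_mul_cos_le (N := N) 1

lemma le_cycleGap (hN : 2 ≤ N) : 16 / (N : ℝ) ^ 2 ≤ cycleGap N := by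
  have hN' : (2 : ℝ) ≤ N := by exact_mod_cast hN
  simpa [cycleGap] using le_two_sub_two_mul_cos (N := N) (t := 1) (by rw [abs_one]; linarith)

lemma cycleGap_pos (hN : 2 ≤ N) : 0 < cycleGap N :=
  (by positivity : (0 : ℝ) < 16 / N ^ 2).trans_le (le_cycleGap hN)

lemma cycleGap_nonneg (N : ℕ) : 0 ≤ cycleGap N := by
  linarith [Real.cos_le_one (2 * Real.pi / N), cycleGap.eq_1 N]

/-- A smooth periodic function comparable to the square of the distance to `0` in `ℤ/Nℤ`,
normalized to take the value `1` at `±1`. -/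
def periodicSq (z : ZMod N) : ℝ :=
  (2 - 2 * Real.cos (2 * Real.pi / N * z.valMinAbs)) / cycleGap N

lemma periodicSq_nonneg (z : ZMod N) : 0 ≤ periodicSq z :=
  div_nonneg (by linarith [Real.cos_le_one (2 * Real.pi / N * z.valMinAbs)]) (cycleGap_nonneg N)

lemma periodicSq_le (hN : 2 ≤ N) (z : ZMod N) : periodicSq z ≤ 5 / 2 * z.valMinAbs ^ 2 := by
  rw [periodicSq, div_le_iff₀ (cycleGap_pos hN)]
  calc 2 - 2 * Real.cos (2 * Real.pi / N * z.valMinAbs)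
      ≤ 40 * z.valMinAbs ^ 2 / N ^ 2 := two_sub_two_mul_cos_le _
    _ = 5 / 2 * z.valMinAbs ^ 2 * (16 / N ^ 2) := by ring
    _ ≤ 5 / 2 * z.valMinAbs ^ 2 * cycleGap N := by gcongr; exact le_cycleGap hN

lemma le_periodicSq (hN : 2 ≤ N) (z : ZMod N) : 2 / 5 * (z.valMinAbs : ℝ) ^ 2 ≤ periodicSq z := by
  have : NeZero N := ⟨by omega⟩
  have hz : |(z.valMinAbs : ℝ)| ≤ N / 2 := by
    rw [le_div_iff₀ two_pos, ← Int.cast_abs, Int.abs_eq_natAbs]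
    have := z.natAbs_valMinAbs_le
    exact_mod_cast (by omega : z.valMinAbs.natAbs * 2 ≤ N)
  rw [periodicSq, le_div_iff₀ (cycleGap_pos hN)]
  calc 2 / 5 * (z.valMinAbs : ℝ) ^ 2 * cycleGap N
      ≤ 2 / 5 * (z.valMinAbs : ℝ) ^ 2 * (40 / N ^ 2) := by gcongr; exact cycleGap_le N
    _ = 16 * (z.valMinAbs : ℝ) ^ 2 / N ^ 2 := by ring
    _ ≤ 2 - 2 * Real.cos (2 * Real.pi / N * z.valMinAbs) := le_two_sub_two_mul_cos hz

lemma periodicSq_intCast [NeZero N] (k : ℤ) :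
    periodicSq (k : ZMod N) = (2 - 2 * Real.cos (2 * Real.pi / N * k)) / cycleGap N := by
  obtain ⟨m, hm⟩ := (ZMod.intCast_eq_intCast_iff_dvd_sub _ _ N).1 (ZMod.coe_valMinAbs (k : ZMod N))
  have hN : (N : ℝ) ≠ 0 := by exact_mod_cast NeZero.ne N
  have hk : (k : ℝ) = (k : ZMod N).valMinAbs + N * m := by exact_mod_cast (by omega)
  have hangle : 2 * Real.pi / N * k =
      2 * Real.pi / N * (k : ZMod N).valMinAbs + m * (2 * Real.pi) := by
    rw [hk]
    field_simp
  rw [hangle, Real.cos_add_int_mul_two_pi, periodicSq]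

/-- Here `c = cos (2πk/N)` and `h = 2 sin (2πk/N) sin (2π/N) / cycleGap N`, where `z = k`. -/
lemma exists_periodicSq_increments (hN : 2 ≤ N) (z : ZMod N) :
    ∃ c h : ℝ, periodicSq (z + 1) - periodicSq z = c + h ∧
      periodicSq (z - 1) - periodicSq z = c - h ∧
      2 * c = 2 - cycleGap N * periodicSq z ∧ c ^ 2 ≤ 1 ∧ h ^ 2 ≤ 4 * periodicSq z := by
  have : NeZero N := ⟨by omega⟩
  obtain ⟨k, rfl⟩ : ∃ k : ℤ, (k : ZMod N) = z := ⟨_, z.coe_valMinAbs⟩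
  have hadd : (k : ZMod N) + 1 = (k + 1 : ℤ) := by push_cast; rfl
  have hsub : (k : ZMod N) - 1 = (k - 1 : ℤ) := by push_cast; rfl
  have hgap := cycleGap_pos hN
  rw [hadd, hsub, periodicSq_intCast, periodicSq_intCast, periodicSq_intCast, Int.cast_add,
    Int.cast_sub, Int.cast_one, mul_add, mul_sub, mul_one, Real.cos_add, Real.cos_sub]
  have hcs := Real.cos_sq_add_sin_sq (2 * Real.pi / N * k)
  have hc := Real.cos_le_one (2 * Real.pi / N * k)
  have hab := Real.cos_sq_add_sin_sq (2 * Real.pi / N)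
  have ha : Real.cos (2 * Real.pi / N) = 1 - cycleGap N / 2 := by rw [cycleGap]; ring
  rw [ha] at hab ⊢
  set c := Real.cos (2 * Real.pi / N * k)
  set s := Real.sin (2 * Real.pi / N * k)
  set b := Real.sin (2 * Real.pi / N)
  set l := cycleGap N
  refine ⟨c, 2 * s * b / l, by field_simp; ring, by field_simp; ring, by field_simp; ring,
    by nlinarith [sq_nonneg s], ?_⟩
  have hprod : s ^ 2 * b ^ 2 ≤ 2 * (1 - c) * l :=
    mul_le_mul (by nlinarith) (by nlinarith) (sq_nonneg b) (by linarith)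
  rw [div_pow, div_le_iff₀ (by positivity)]
  calc (2 * s * b) ^ 2 = 4 * (s ^ 2 * b ^ 2) := by ring
    _ ≤ 4 * (2 * (1 - c) * l) := by gcongr
    _ = 4 * ((2 - 2 * c) / l) * l ^ 2 := by field_simp

lemma periodicSq_second_difference (hN : 2 ≤ N) (z : ZMod N) :
    (periodicSq (z + 1) - periodicSq z) + (periodicSq (z - 1) - periodicSq z) =
      2 - cycleGap N * periodicSq z := by
  obtain ⟨c, h, hplus, hminus, hc, -, -⟩ := exists_periodicSq_increments hN z
  rw [hplus, hminus, ← hc]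
  ring

lemma sum_sq_periodicSq_increments_le (hN : 2 ≤ N) (z : ZMod N) :
    (periodicSq (z + 1) - periodicSq z) ^ 2 + (periodicSq (z - 1) - periodicSq z) ^ 2 ≤
      2 + 8 * periodicSq z := by
  obtain ⟨c, h, hplus, hminus, -, hc, hh⟩ := exists_periodicSq_increments hN z
  rw [hplus, hminus]
  linarith

end PeriodicSquare

/-! ### An almost superharmonic function -/

section InvFourthRoot

lemma inv_sqrt_sqrt_one_add_le {t : ℝ} (ht : -(1 / 10) ≤ t) :
    (√√(1 + t))⁻¹ ≤ 1 - t / 4 + 11 / 64 * t ^ 2 := by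
  obtain ⟨q, hq⟩ : ∃ q, q = √√(1 + t) := ⟨_, rfl⟩
  have hq4 : q ^ 4 = 1 + t := by
    rw [hq, pow_mul _ 2 2, Real.sq_sqrt (Real.sqrt_nonneg _), Real.sq_sqrt (by linarith)]
  have hq_ge : 97 / 100 ≤ q := by
    rw [hq]
    exact Real.le_sqrt_of_sq_le (Real.le_sqrt_of_sq_le (by linarith))
  have hquot : 0 ≤ 11 * q ^ 7 + 22 * q ^ 6 + 33 * q ^ 5 + 44 * q ^ 4 + 17 * q ^ 3 - 10 * q ^ 2 -
      37 * q - 64 := by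
    obtain ⟨r, hr, rfl⟩ : ∃ r : ℝ, 0 ≤ r ∧ q = 97 / 100 + r := ⟨q - 97 / 100, by linarith, by ring⟩
    ring_nf
    positivity
  rw [← hq, inv_le_iff_one_le_mul₀' (by linarith), ← sub_nonneg]
  calc 0 ≤ (q - 1) ^ 2 * (11 * q ^ 7 + 22 * q ^ 6 + 33 * q ^ 5 + 44 * q ^ 4 + 17 * q ^ 3 -
        10 * q ^ 2 - 37 * q - 64) / 64 := by positivity
    _ = q * (1 - t / 4 + 11 / 64 * t ^ 2) - 1 := by
        rw [eq_sub_of_add_eq' hq4.symm]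
        ring

lemma inv_sqrt_sqrt_add_le {u h : ℝ} (hu : 0 < u) (hh : -(u / 10) ≤ h) :
    (√√(u + h))⁻¹ ≤ (√√u)⁻¹ * (1 - h / (4 * u) + 11 / 64 * (h ^ 2 / u ^ 2)) := by
  have ht : -(1 / 10) ≤ h / u := by
    rw [le_div_iff₀ hu]
    linarith
  have hscale : u + h = u * (1 + h / u) := by field_simp
  rw [hscale, Real.sqrt_mul hu.le, Real.sqrt_mul (Real.sqrt_nonneg u), mul_inv]
  gcongr
  refine (inv_sqrt_sqrt_one_add_le ht).trans_eq ?_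
  field_simp

/-- Averaging a second-order Taylor bound over two increments `h` and `k`. -/
lemma inv_sqrt_sqrt_add_add_le {u h k b : ℝ} (hu : 1000 ≤ u) (hb : h ^ 2 + k ^ 2 ≤ b)
    (hbu : b ≤ 2 + 8 * u) :
    (√√(u + h))⁻¹ + (√√(u + k))⁻¹ ≤
      (√√u)⁻¹ * (2 - (h + k) / (4 * u) + 11 / 64 * (b / u ^ 2)) := by
  have hu_pos : 0 < u := by linarith
  have hsmall : b ≤ (u / 10) ^ 2 := by nlinarith
  have hh : -(u / 10) ≤ h := neg_le_of_abs_le (abs_le_of_sq_le_sq (by nlinarith) (by linarith))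
  have hk : -(u / 10) ≤ k := neg_le_of_abs_le (abs_le_of_sq_le_sq (by nlinarith) (by linarith))
  calc (√√(u + h))⁻¹ + (√√(u + k))⁻¹
      ≤ (√√u)⁻¹ * (1 - h / (4 * u) + 11 / 64 * (h ^ 2 / u ^ 2)) +
        (√√u)⁻¹ * (1 - k / (4 * u) + 11 / 64 * (k ^ 2 / u ^ 2)) :=
        add_le_add (inv_sqrt_sqrt_add_le hu_pos hh) (inv_sqrt_sqrt_add_le hu_pos hk)
    _ = (√√u)⁻¹ * (2 - (h + k) / (4 * u) + 11 / 64 * ((h ^ 2 + k ^ 2) / u ^ 2)) := by ring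
    _ ≤ (√√u)⁻¹ * (2 - (h + k) / (4 * u) + 11 / 64 * (b / u ^ 2)) := by gcongr

end InvFourthRoot

section Potential

variable {d N : ℕ}

/-- A smooth periodic function comparable to `1 + |y|²`; the constant is large enough for the
increments between neighbours to be small compared to the value. -/
def torusSq (y : Torus d N) : ℝ := ∑ i, periodicSq (y i) + 1000

/-- A substitute on the torus for `|y|^{-1/2}`, which is superharmonic away from `0` because
`1 / 2 < d - 2`. -/
def potential (y : Torus d N) : ℝ := (√√(torusSq y))⁻¹

lemma sum_comp_add_single (φ : ZMod N → ℝ) (y : Torus d N) (i : Fin d) (a : ZMod N) :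
    ∑ j, φ ((y + Pi.single i a : Torus d N) j) = ∑ j, φ (y j) + (φ (y i + a) - φ (y i)) := by
  rw [← Finset.add_sum_erase _ _ (Finset.mem_univ i),
    ← Finset.add_sum_erase _ (fun j => φ (y j)) (Finset.mem_univ i),
    Finset.sum_congr rfl fun j hj => by
      rw [Pi.add_apply, Pi.single_eq_of_ne (Finset.ne_of_mem_erase hj), add_zero]]
  simp only [Pi.add_apply, Pi.single_eq_same]
  ring

lemma torusSq_add_single (y : Torus d N) (i : Fin d) (a : ZMod N) :
    torusSq (y + Pi.single i a) = torusSq y + (periodicSq (y i + a) - periodicSq (y i)) := by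
  rw [torusSq, torusSq, sum_comp_add_single]
  ring

lemma sum_periodicSq_nonneg (y : Torus d N) : 0 ≤ ∑ i, periodicSq (y i) :=
  Finset.sum_nonneg fun _ _ => periodicSq_nonneg _

lemma le_torusSq (y : Torus d N) : 1000 ≤ torusSq y :=
  le_add_of_nonneg_left (sum_periodicSq_nonneg y)

lemma periodicSq_le_torusSq (y : Torus d N) (i : Fin d) : periodicSq (y i) ≤ torusSq y := by
  have := Finset.single_le_sum (f := fun i => periodicSq (y i)) (fun i _ => periodicSq_nonneg _)
    (Finset.mem_univ i)
  rw [torusSq]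
  linarith

lemma potential_nonneg (y : Torus d N) : 0 ≤ potential y := by unfold potential; positivity

lemma potential_add_single_add_sub_single_le (hN : 2 ≤ N) (y : Torus d N) (i : Fin d) :
    potential (y + Pi.single i 1) + potential (y - Pi.single i 1) ≤
      potential y * (2 - (2 - cycleGap N * periodicSq (y i)) / (4 * torusSq y) +
        11 / 64 * ((2 + 8 * periodicSq (y i)) / torusSq y ^ 2)) := by
  rw [sub_eq_add_neg y, ← Pi.single_neg, potential, potential, torusSq_add_single,
    torusSq_add_single, ← sub_eq_add_neg, ← periodicSq_second_difference hN]
  exact inv_sqrt_sqrt_add_add_le (le_torusSq y) (sum_sq_periodicSq_increments_le hN _)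
    (by linarith [periodicSq_le_torusSq y i])

lemma nbrAvg_potential_le_mul (hd : 3 ≤ d) (hN : 2 ≤ N) (y : Torus d N) :
    nbrAvg potential y ≤ potential y *
      (1 + (cycleGap N * ∑ i, periodicSq (y i) - 2 / 5) / (8 * d * torusSq y)) := by
  have hd' : (3 : ℝ) ≤ d := by exact_mod_cast hd
  have hpot := potential_nonneg y
  have hu := le_torusSq y
  have hsum := Finset.sum_le_sum fun i (_ : i ∈ Finset.univ) =>
    potential_add_single_add_sub_single_le hN y i
  obtain ⟨p, hp⟩ : ∃ p, p = ∑ i, periodicSq (y i) := ⟨_, rfl⟩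
  have hpu : p = torusSq y - 1000 := by rw [hp, torusSq]; ring
  set u := torusSq y
  set w := potential y
  have : (0 : ℝ) < d := by linarith
  have : 0 < u := by linarith
  have hquadratic : 11 / 64 * ((2 * d + 8 * p) / u ^ 2) ≤ (2 * d - 2 / 5) / (4 * u) := by
    rw [← mul_div_assoc, div_le_div_iff₀ (by positivity) (by positivity)]
    have : 11 / 16 * (2 * d + 8 * p) ≤ (2 * d - 2 / 5) * u := by nlinarith
    nlinarith
  rw [nbrAvg, div_le_iff₀ (by positivity), ← hp]
  calc ∑ i, (potential (y + Pi.single i 1) + potential (y - Pi.single i 1))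
      ≤ w * (2 * d - (2 * d - cycleGap N * p) / (4 * u) + 11 / 64 * ((2 * d + 8 * p) / u ^ 2)) := by
        refine hsum.trans_eq ?_
        simp only [← Finset.mul_sum, Finset.sum_add_distrib, Finset.sum_sub_distrib,
          ← Finset.sum_div, ← hp, Finset.sum_const, Finset.card_univ, Fintype.card_fin,
          nsmul_eq_mul, mul_comm (d : ℝ)]
    _ ≤ w * (2 * d - (2 * d - cycleGap N * p) / (4 * u) + (2 * d - 2 / 5) / (4 * u)) := by gcongr
    _ = w * (1 + (cycleGap N * p - 2 / 5) / (8 * d * u)) * (2 * d) := by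
        field_simp
        ring

lemma potential_le_inv {y : Torus d N} {r : ℝ} (hr : 0 < r) (h : r ^ 4 ≤ torusSq y) :
    potential y ≤ r⁻¹ :=
  inv_anti₀ hr (Real.le_sqrt_of_sq_le (Real.le_sqrt_of_sq_le (by rwa [← pow_mul])))

lemma inv_le_potential {y : Torus d N} {r : ℝ} (hr : 0 ≤ r) (h : torusSq y ≤ r ^ 4) :
    r⁻¹ ≤ potential y := by
  have hu := le_torusSq y
  exact inv_anti₀ (Real.sqrt_pos.2 (Real.sqrt_pos.2 (by linarith)))
    (Real.sqrt_le_iff.2 ⟨hr, Real.sqrt_le_iff.2 ⟨by positivity, by rwa [← pow_mul]⟩⟩)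

/-- The error is only present where the curvature of the torus is felt, at distance of order `N`
from `0`, and there the potential is of order `1 / √N`. -/
lemma nbrAvg_potential_le (hd : 3 ≤ d) (hN : 2 ≤ N) (y : Torus d N) :
    nbrAvg potential y ≤ potential y + 7 / (N ^ 2 * √N) := by
  have hd' : (3 : ℝ) ≤ d := by exact_mod_cast hd
  have hN_pos : (0 : ℝ) < N := by exact_mod_cast (by omega : 0 < N)
  have hpot := potential_nonneg y
  have hu := le_torusSq y
  have hp := sum_periodicSq_nonneg y
  have hpu : ∑ i, periodicSq (y i) ≤ torusSq y := le_add_of_nonneg_right (by norm_num)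
  refine (nbrAvg_potential_le_mul hd hN y).trans ?_
  rw [mul_one_add]
  gcongr
  set p := ∑ i, periodicSq (y i)
  set u := torusSq y
  have : 0 < u := by linarith
  rcases le_or_gt (cycleGap N * p) (2 / 5) with hnear | hfar
  · exact (mul_nonpos_of_nonneg_of_nonpos hpot
      (div_nonpos_of_nonpos_of_nonneg (by linarith) (by positivity))).trans (by positivity)
  have hcurv : cycleGap N * p ≤ 40 / N ^ 2 * u :=
    mul_le_mul (cycleGap_le N) hpu hp (by positivity)
  have hlarge : (√N / 4) ^ 4 ≤ u := by
    have : (N : ℝ) ^ 2 ≤ 100 * u := by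
      have := hfar.trans_le hcurv
      rw [div_mul_eq_mul_div, lt_div_iff₀ (by positivity)] at this
      linarith
    rw [div_pow, pow_mul _ 2 2, Real.sq_sqrt hN_pos.le]
    linarith
  calc potential y * ((cycleGap N * p - 2 / 5) / (8 * d * u))
      ≤ (√N / 4)⁻¹ * ((40 / N ^ 2 * u) / (8 * 3 * u)) := by
        gcongr
        · exact potential_le_inv (by positivity) hlarge
        · linarith
    _ = (20 / 3) / (N ^ 2 * √N) := by
        field_simp
        norm_num
    _ ≤ 7 / (N ^ 2 * √N) := by gcongr; norm_num

end Potential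

section Balls

variable {d N : ℕ} [NeZero N]

lemma min_val_neg_val_eq_natAbs (a : ZMod N) : min (-a).val a.val = a.valMinAbs.natAbs := by
  rw [ZMod.valMinAbs_natAbs_eq_min, ZMod.neg_val]
  have := a.val_lt
  split_ifs with ha
  · simp [ha]
  · exact min_comm _ _

lemma mem_torusBall_zero_iff {R : ℝ} (hR : 0 ≤ R) {y : Torus d N} :
    y ∈ torusBall 0 R ↔ ∀ i, |((y i).valMinAbs : ℝ)| ≤ R := by
  have hdist : torusDist 0 y = Finset.univ.sup fun i => (y i).valMinAbs.natAbs := by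
    simp only [torusDist, Pi.zero_apply, zero_sub, sub_zero, min_val_neg_val_eq_natAbs]
  rw [torusBall, Set.mem_ofPred_eq, hdist, ← Nat.le_floor_iff hR, Finset.sup_le_iff]
  simp only [Finset.mem_univ, true_imp_iff, Nat.le_floor_iff hR, Nat.cast_natAbs, Int.cast_abs]

lemma zero_mem_torusBall {R : ℝ} (hR : 0 ≤ R) : (0 : Torus d N) ∈ torusBall 0 R :=
  (mem_torusBall_zero_iff hR).2 fun i => by simpa using hR

lemma natAbs_valMinAbs_one_le : (1 : ZMod N).valMinAbs.natAbs ≤ 1 := by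
  rw [ZMod.valMinAbs_natAbs_eq_min, ZMod.val_one_eq_one_mod]
  exact (min_le_left _ _).trans (Nat.mod_le 1 N)

lemma natAbs_valMinAbs_single_one_le (i j : Fin d) :
    ((Pi.single i 1 : Torus d N) j).valMinAbs.natAbs ≤ 1 := by
  rw [Pi.single_apply]
  split_ifs
  · exact natAbs_valMinAbs_one_le
  · simp

lemma natAbs_valMinAbs_le_add_one_of_adj {y z : Torus d N} (h : adj y z) (i : Fin d) :
    (z i).valMinAbs.natAbs ≤ (y i).valMinAbs.natAbs + 1 := by
  have hadd (a b : ZMod N) : (a + b).valMinAbs.natAbs ≤ a.valMinAbs.natAbs + b.valMinAbs.natAbs :=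
    (ZMod.natAbs_valMinAbs_add_le a b).trans (Int.natAbs_add_le _ _)
  obtain ⟨j, rfl | rfl⟩ := exists_eq_add_or_sub_single_of_adj h
  · exact (hadd _ _).trans (Nat.add_le_add_left (natAbs_valMinAbs_single_one_le j i) _)
  · rw [Pi.sub_apply, sub_eq_add_neg]
    refine (hadd _ _).trans (Nat.add_le_add_left ?_ _)
    rw [ZMod.natAbs_valMinAbs_neg]
    exact natAbs_valMinAbs_single_one_le j i

lemma union_extBdry_torusBall_subset {R : ℝ} (hR : 0 ≤ R) :
    torusBall 0 R ∪ extBdry adj (torusBall 0 R) ⊆ torusBall (0 : Torus d N) (R + 1) := by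
  rintro z (hz | ⟨-, y, hy, hyz⟩) <;> rw [mem_torusBall_zero_iff (by positivity)] at *
  · exact fun i => (hz i).trans (by linarith)
  · intro i
    have hstep : |((z i).valMinAbs : ℝ)| ≤ |((y i).valMinAbs : ℝ)| + 1 := by
      have := natAbs_valMinAbs_le_add_one_of_adj hyz i
      zify at this
      exact_mod_cast this
    exact hstep.trans (by gcongr; exact hy i)

lemma torusSq_le_of_mem_torusBall (hN : 2 ≤ N) {R : ℝ} (hR : 0 ≤ R) {y : Torus d N}
    (hy : y ∈ torusBall 0 R) : torusSq y ≤ 5 / 2 * d * R ^ 2 + 1000 := by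
  have hcoord (i : Fin d) : periodicSq (y i) ≤ 5 / 2 * R ^ 2 := by
    refine (periodicSq_le hN _).trans ?_
    have := sq_le_sq' (neg_le_of_abs_le ((mem_torusBall_zero_iff hR).1 hy i))
      (le_of_abs_le ((mem_torusBall_zero_iff hR).1 hy i))
    linarith
  have := Finset.sum_le_card_nsmul Finset.univ _ _ fun i _ => hcoord i
  rw [Finset.card_univ, Fintype.card_fin, nsmul_eq_mul] at this
  rw [torusSq]
  linarith

lemma inv_le_potential_of_mem_torusBall (hN : 2 ≤ N) {R : ℝ} (hR : 1 ≤ R) {y : Torus d N}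
    (hy : y ∈ torusBall 0 (R + 1)) : ((10 * d + 1000) * √R)⁻¹ ≤ potential y := by
  refine inv_le_potential (by positivity)
    ((torusSq_le_of_mem_torusBall hN (by positivity) hy).trans ?_)
  have hK : (1 : ℝ) ≤ 10 * d + 1000 := by linarith [d.cast_nonneg (α := ℝ)]
  calc 5 / 2 * d * (R + 1) ^ 2 + 1000
      ≤ 5 / 2 * d * (R + R) ^ 2 + 1000 * R ^ 2 := by
        gcongr
        exact le_mul_of_one_le_right (by norm_num) (one_le_pow₀ hR)
    _ = (10 * d + 1000) ^ 1 * R ^ 2 := by ring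
    _ ≤ (10 * d + 1000) ^ 4 * R ^ 2 := by
        gcongr
        norm_num
    _ = ((10 * d + 1000) * √R) ^ 4 := by
        rw [mul_pow, pow_mul √R 2 2, Real.sq_sqrt (by linarith)]

lemma potential_le_of_notMem_torusBall (hN : 2 ≤ N) {L : ℝ} (hL : 0 < L) {y : Torus d N}
    (hy : y ∉ torusBall 0 L) : potential y ≤ 2 / √L := by
  obtain ⟨i, hi⟩ : ∃ i, L < |((y i).valMinAbs : ℝ)| := by
    simpa only [mem_torusBall_zero_iff hL.le, not_forall, not_le] using hy
  have hsq : L ^ 2 ≤ ((y i).valMinAbs : ℝ) ^ 2 := sq_le_sq.2 (by rw [abs_of_pos hL]; exact hi.le)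
  rw [← inv_div]
  refine potential_le_inv (by positivity) ?_
  rw [div_pow, pow_mul _ 2 2, Real.sq_sqrt hL.le]
  linarith [le_periodicSq hN (y i), periodicSq_le_torusSq y i, sq_nonneg L]

end Balls

section Bump

variable {d N : ℕ}

/-- A strictly superharmonic function on the ball of radius `N / 4`, used to absorb the defect of
superharmonicity of `potential`. -/
def bump (i : Fin d) (y : Torus d N) : ℝ := N ^ 2 - ((y i).valMinAbs : ℝ) ^ 2

lemma bump_le (i : Fin d) (y : Torus d N) : bump i y ≤ N ^ 2 :=
  sub_le_self _ (sq_nonneg _)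

variable [NeZero N]

lemma abs_valMinAbs_le (a : ZMod N) : |(a.valMinAbs : ℝ)| ≤ N / 2 := by
  have := a.natAbs_valMinAbs_le
  rw [← Int.cast_abs, ← Nat.cast_natAbs]
  exact (Nat.cast_le.2 this).trans Nat.cast_div_le

lemma bump_nonneg (i : Fin d) (y : Torus d N) : 0 ≤ bump i y :=
  sub_nonneg.2 (sq_le_sq' (by linarith [neg_le_of_abs_le (abs_valMinAbs_le (y i))])
    (by linarith [le_of_abs_le (abs_valMinAbs_le (y i))]))

lemma valMinAbs_add_one {a : ZMod N} (h : a.valMinAbs * 2 + 2 ≤ N) :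
    (a + 1).valMinAbs = a.valMinAbs + 1 := by
  have := a.valMinAbs_mem_Ioc.1
  exact (ZMod.valMinAbs_spec _ _).2 ⟨by simp, by constructor <;> linarith⟩

lemma valMinAbs_sub_one {a : ZMod N} (h : -(N : ℤ) < a.valMinAbs * 2 - 2) :
    (a - 1).valMinAbs = a.valMinAbs - 1 := by
  have := a.valMinAbs_mem_Ioc.2
  exact (ZMod.valMinAbs_spec _ _).2 ⟨by simp, by constructor <;> linarith⟩

lemma nbrAvg_bump (hN : 5 ≤ N) (i : Fin d) {y : Torus d N} (hy : y ∈ torusBall 0 (N / 4 : ℝ)) :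
    nbrAvg (bump i) y = bump i y - 1 / d := by
  have hN' : (5 : ℝ) ≤ N := by exact_mod_cast hN
  have hyi := abs_le.1 ((mem_torusBall_zero_iff (by positivity)).1 hy i)
  have hadd : (y i + 1).valMinAbs = (y i).valMinAbs + 1 :=
    valMinAbs_add_one (by exact_mod_cast (by linarith : ((y i).valMinAbs : ℝ) * 2 + 2 ≤ N))
  have hsub : (y i - 1).valMinAbs = (y i).valMinAbs - 1 :=
    valMinAbs_sub_one (by exact_mod_cast (by linarith : -(N : ℝ) < (y i).valMinAbs * 2 - 2))
  have hsum (j : Fin d) : bump i (y + Pi.single j 1) + bump i (y - Pi.single j 1) =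
      2 * bump i y - if i = j then 2 else 0 := by
    unfold bump
    rcases eq_or_ne i j with rfl | hij
    · rw [Pi.add_apply, Pi.sub_apply, Pi.single_eq_same, hadd, hsub, if_pos rfl]
      push_cast
      ring
    · rw [Pi.add_apply, Pi.sub_apply, Pi.single_eq_of_ne hij, add_zero, sub_zero, if_neg hij]
      ring
  have : (d : ℝ) ≠ 0 := Nat.cast_ne_zero.2 i.pos.ne'
  rw [nbrAvg, Finset.sum_congr rfl fun j _ => hsum j, Finset.sum_sub_distrib, Finset.sum_ite_eq,
    Finset.sum_const, Finset.card_univ, Fintype.card_fin, nsmul_eq_mul]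
  simp only [Finset.mem_univ, if_true]
  field_simp

end Bump

/-! ### Hitting estimates on two scales -/

section TwoScales

variable {d N : ℕ}

lemma nbrAvg_add_const_mul (f g : Torus d N → ℝ) (c : ℝ) (y : Torus d N) :
    nbrAvg (fun z => f z + c * g z) y = nbrAvg f y + c * nbrAvg g y := by
  simp only [nbrAvg, mul_div_assoc', ← add_div, Finset.mul_sum, ← Finset.sum_add_distrib]
  congr! 2
  ring

/-- A superharmonic perturbation of `potential` on the ball of radius `N / 4`. -/
def confinedPotential (i : Fin d) (y : Torus d N) : ℝ :=
  potential y + 7 * d / (N ^ 2 * √N) * bump i y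

variable [NeZero N]

lemma potential_le_confinedPotential (i : Fin d) (y : Torus d N) :
    potential y ≤ confinedPotential i y :=
  le_add_of_nonneg_right (mul_nonneg (by positivity) (bump_nonneg i y))

lemma nbrAvg_confinedPotential_le (hd : 3 ≤ d) (hN : 5 ≤ N) (i : Fin d) {y : Torus d N}
    (hy : y ∈ torusBall 0 (N / 4 : ℝ)) :
    nbrAvg (confinedPotential i) y ≤ confinedPotential i y := by
  have : (d : ℝ) ≠ 0 := Nat.cast_ne_zero.2 (by omega)
  calc nbrAvg (confinedPotential i) y
      = nbrAvg potential y + 7 * d / (N ^ 2 * √N) * (bump i y - 1 / d) := by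
        rw [← nbrAvg_bump hN i hy]
        exact nbrAvg_add_const_mul _ _ _ _
    _ ≤ potential y + 7 / (N ^ 2 * √N) + 7 * d / (N ^ 2 * √N) * (bump i y - 1 / d) := by
        gcongr
        exact nbrAvg_potential_le hd (by omega) y
    _ = confinedPotential i y := by
        rw [confinedPotential]
        field_simp
        ring

lemma confinedPotential_le_of_notMem_torusBall (hN : 2 ≤ N) (i : Fin d) {L : ℝ} (hL : 0 < L)
    (hLN : L ≤ N) {y : Torus d N} (hy : y ∉ torusBall 0 L) :
    confinedPotential i y ≤ (2 + 7 * d) / √L := by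
  have : (N : ℝ) ≠ 0 := Nat.cast_ne_zero.2 (by omega)
  calc confinedPotential i y ≤ 2 / √L + 7 * d / (N ^ 2 * √N) * N ^ 2 := by
        rw [confinedPotential]
        gcongr
        · exact potential_le_of_notMem_torusBall hN hL hy
        · exact bump_le i y
    _ = 2 / √L + 7 * d / √N := by field_simp
    _ ≤ 2 / √L + 7 * d / √L := by gcongr
    _ = (2 + 7 * d) / √L := (add_div _ _ _).symm

variable {x : Torus d N} {μ : Measure (ℕ → Torus d N)} {ν : Measure (ℕ → ℝ)} {R L : ℝ}

lemma measureReal_hitT_torusBall_le_exitT_le (hd : 3 ≤ d) (hN : 2 ≤ N)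
    (hμ : IsWalkLaw μ (pointInit x)) (hν : IsIIDExp ν) (hR : 1 ≤ R) (hL : 0 < L) (hLN : L ≤ N)
    (hx : x ∉ torusBall 0 L) :
    (μ.prod ν).real {ω | hitT (torusBall 0 R) ω ≤ exitT (torusBall 0 (N / 4 : ℝ)) ω} ≤
      (10 * d + 1000) * (2 + 7 * d) * (√R / √L) := by
  have hR_sqrt : 1 ≤ √R := Real.one_le_sqrt.2 hR
  have : 0 < √L := Real.sqrt_pos.2 hL
  rcases lt_or_ge N 5 with hsmall | hlarge
  · have := hμ.1
    have := hν.1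
    have hL2 : √L ≤ 2 := by
      have : (N : ℝ) ≤ 4 := by exact_mod_cast Nat.le_of_lt_succ hsmall
      exact Real.sqrt_le_iff.2 ⟨by norm_num, by linarith⟩
    calc _ ≤ (1 : ℝ) := measureReal_le_one
      _ ≤ (10 * 0 + 1000) * (2 + 7 * 0) * (1 / 2) := by norm_num
      _ ≤ (10 * d + 1000) * (2 + 7 * d) * (√R / √L) := by
        gcongr
        exacts [d.cast_nonneg, d.cast_nonneg]
  · let i : Fin d := ⟨0, by omega⟩
    have hball : torusBall 0 R ⊆ torusBall (0 : Torus d N) (R + 1) :=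
      Set.subset_union_left.trans (union_extBdry_torusBall_subset (by linarith))
    calc _ ≤ μ.real {ω | ∃ k, ω ∈ staysBefore (torusBall 0 (N / 4 : ℝ) \ torusBall 0 R) k ∧
            ω k ∈ torusBall 0 R} :=
          measureReal_hitT_le_exitT_le hμ hν (zero_mem_torusBall (by linarith))
      _ ≤ confinedPotential i x / ((10 * d + 1000) * √R)⁻¹ :=
          hμ.measureReal_hit_le Set.disjoint_sdiff_left
            (fun y => (potential_nonneg y).trans (potential_le_confinedPotential i y))
            (by positivity)
            (fun y hy => (inv_le_potential_of_mem_torusBall hN hR (hball hy)).trans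
              (potential_le_confinedPotential i y))
            (fun y hy => nbrAvg_confinedPotential_le hd hlarge i hy.1)
      _ ≤ (2 + 7 * d) / √L / ((10 * d + 1000) * √R)⁻¹ := by
          gcongr
          exact confinedPotential_le_of_notMem_torusBall hN i hL hLN hx
      _ = (10 * d + 1000) * (2 + 7 * d) * (√R / √L) := by
          field_simp

lemma measureReal_hitT_union_extBdry_torusBall_le (hd : 3 ≤ d) (hN : 2 ≤ N)
    (hμ : IsWalkLaw μ (pointInit x)) (hν : IsIIDExp ν) (hR : 1 ≤ R) (hL : 0 < L) (hLN : L ≤ N)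
    (hx : x ∉ torusBall 0 L) {t : ℝ} (ht : 0 ≤ t) :
    (μ.prod ν).real {ω | hitT (torusBall 0 R ∪ extBdry adj (torusBall 0 R)) ω ≤ t} ≤
      70 * (10 * d + 1000) * (√R / √L) * (1 + t / N ^ 2) + Real.exp (-t) := by
  set V : Set (Torus d N) := torusBall 0 R ∪ extBdry adj (torusBall 0 R)
  set n := ⌈10 * t⌉₊
  have hn_lower : 10 * t ≤ n := Nat.le_ceil _
  have hn_upper : (n : ℝ) ≤ 10 * t + 1 := (Nat.ceil_lt_add_one (by positivity)).le
  have hN' : (2 : ℝ) ≤ N := by exact_mod_cast hN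
  have : 0 < √L := Real.sqrt_pos.2 hL
  have : 1 ≤ √R := Real.one_le_sqrt.2 hR
  have hV : 0 ∈ V := Or.inl (zero_mem_torusBall (by linarith))
  have hclock : ν.real {g | jumpTime g n ≤ t} ≤ Real.exp (-t) :=
    (hν.measureReal_jumpTime_le n t).trans (Real.exp_le_exp.2 (by linarith))
  have hdrift : 2 / √L + n * (7 / (N ^ 2 * √N)) ≤ 70 * (1 + t / N ^ 2) / √L := by
    calc 2 / √L + n * (7 / (N ^ 2 * √N))
        ≤ 2 / √L + (10 * t + 1) * (7 / (N ^ 2 * √L)) := by gcongr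
      _ = (2 + 7 / N ^ 2 + 70 * (t / N ^ 2)) / √L := by field_simp; ring
      _ ≤ 70 * (1 + t / N ^ 2) / √L := by
        have : 7 / (N : ℝ) ^ 2 ≤ 7 / 2 ^ 2 := by gcongr
        gcongr
        linarith
  refine (measureReal_hitT_le hμ hν hV t n).trans (add_le_add ?_ hclock)
  calc μ.real {ω | ∃ k < n, ω ∈ staysBefore Vᶜ k ∧ ω k ∈ V}
      ≤ (potential x + n * (7 / (N ^ 2 * √N))) / ((10 * d + 1000) * √R)⁻¹ :=
        hμ.measureReal_hit_before_le disjoint_compl_left potential_nonneg (by positivity)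
          (by positivity)
          (fun y hy => inv_le_potential_of_mem_torusBall hN hR
            (union_extBdry_torusBall_subset (by linarith) hy))
          (fun y _ => nbrAvg_potential_le hd hN y) n
    _ ≤ (70 * (1 + t / N ^ 2) / √L) / ((10 * d + 1000) * √R)⁻¹ := by
        gcongr
        exact (add_le_add_left (potential_le_of_notMem_torusBall hN hL hx) _).trans hdrift
    _ = 70 * (10 * d + 1000) * (√R / √L) * (1 + t / N ^ 2) := by
        field_simp

end TwoScales

/-! ### Polynomially separated scales -/

section PolynomialScales

variable {N : ℕ} {ε : ℝ}

lemma sqrt_div_sqrt_le_rpow {R L : ℝ} (hL : 0 < L) (h : R ≤ 4 * N ^ (-(ε / 2)) * L) :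
    √R / √L ≤ 2 * N ^ (-(ε / 4)) := by
  have hsq : (2 * (N : ℝ) ^ (-(ε / 4))) ^ 2 = 4 * N ^ (-(ε / 2)) := by
    rw [mul_pow, ← Real.rpow_mul_natCast N.cast_nonneg]
    norm_num
    ring_nf
  rw [← Real.sqrt_div' R hL.le]
  exact Real.sqrt_le_iff.2 ⟨by positivity, by rwa [hsq, div_le_iff₀ hL]⟩

lemma one_add_tstar_div_sq_le (hN : 2 ≤ N) (hε : 0 < ε) :
    1 + tstar N / N ^ 2 ≤ (1 + (16 / ε) ^ 2) * (N : ℝ) ^ (ε / 8) := by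
  have hN' : (2 : ℝ) ≤ N := by exact_mod_cast hN
  have : 0 ≤ Real.log N := Real.log_nonneg (by linarith)
  have hlog : Real.log N ≤ 16 / ε * (N : ℝ) ^ (ε / 16) := by
    refine (Real.log_le_rpow_div N.cast_nonneg (by positivity : 0 < ε / 16)).trans_eq ?_
    field_simp
  calc 1 + tstar N / N ^ 2 = 1 + Real.log N ^ 2 := by
        rw [tstar]
        field_simp
    _ ≤ (N : ℝ) ^ (ε / 8) + (16 / ε * (N : ℝ) ^ (ε / 16)) ^ 2 := by
        gcongr
        exact Real.one_le_rpow (by linarith) (by positivity)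
    _ = (1 + (16 / ε) ^ 2) * (N : ℝ) ^ (ε / 8) := by
        rw [mul_pow, ← Real.rpow_mul_natCast N.cast_nonneg]
        norm_num
        ring_nf

lemma exp_neg_tstar_le (hN : 2 ≤ N) : Real.exp (-tstar N) ≤ (N : ℝ)⁻¹ := by
  have hN' : (2 : ℝ) ≤ N := by exact_mod_cast hN
  have hlog : 1 / 2 ≤ Real.log N := by
    linarith [Real.log_le_log two_pos hN', Real.log_two_gt_d9]
  have hlog_le : Real.log N ≤ tstar N := by
    calc Real.log N ≤ 2 ^ 2 * (1 / 2 * Real.log N) := by linarith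
      _ ≤ N ^ 2 * (Real.log N * Real.log N) := by gcongr
      _ = tstar N := by rw [tstar, mul_pow, sq (Real.log N)]
  rw [Real.exp_neg]
  exact inv_anti₀ (by linarith) (Real.le_exp_of_log_le hlog_le)

/-- A constant, depending only on the dimension and on `ε`, for which the hitting estimates hold
with rate `N ^ (-(ε / 8))`. -/
def hittingConst (d : ℕ) (ε : ℝ) : ℝ :=
  140 * (10 * d + 1000) * (2 + 7 * d) * (1 + (16 / ε) ^ 2) + 1

lemma hittingConst_pos (d : ℕ) (ε : ℝ) : 0 < hittingConst d ε := by
  unfold hittingConst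
  positivity

variable {d : ℕ} {x : Torus d N} {P : Measure (CTPath d N)} {R L : ℝ}

lemma IsCTWalk.measureReal_hitT_torusBall_le_exitT_le_rpow (hP : IsCTWalk P (pointInit x))
    (hd : 3 ≤ d) (hN : 2 ≤ N) (hε : 0 < ε) (hR : 1 ≤ R) (hL : 0 < L) (hLN : L ≤ N)
    (hRL : R ≤ 4 * N ^ (-(ε / 2)) * L) (hx : x ∉ torusBall 0 L) :
    P.real {ω | hitT (torusBall 0 R) ω ≤ exitT (torusBall 0 (N / 4 : ℝ)) ω} ≤
      hittingConst d ε * N ^ (-(ε / 8)) := by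
  have : NeZero N := ⟨by omega⟩
  have hN' : (1 : ℝ) ≤ N := by exact_mod_cast (by omega : 1 ≤ N)
  obtain ⟨μ, ν, hμ, hν, rfl⟩ := hP
  calc _ ≤ (10 * d + 1000) * (2 + 7 * d) * (√R / √L) :=
        measureReal_hitT_torusBall_le_exitT_le hd hN hμ hν hR hL hLN hx
    _ ≤ (10 * d + 1000) * (2 + 7 * d) * (2 * N ^ (-(ε / 4))) := by
        gcongr
        exact sqrt_div_sqrt_le_rpow hL hRL
    _ = 2 * (10 * d + 1000) * (2 + 7 * d) * (1 + 0) * N ^ (-(ε / 4)) := by ring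
    _ ≤ 140 * (10 * d + 1000) * (2 + 7 * d) * (1 + (16 / ε) ^ 2) * N ^ (-(ε / 8)) := by
        gcongr
        · norm_num
        · positivity
        · norm_num
    _ ≤ hittingConst d ε * N ^ (-(ε / 8)) := by
        gcongr
        exact le_add_of_nonneg_right zero_le_one

lemma IsCTWalk.measureReal_hitT_union_extBdry_torusBall_le_rpow (hP : IsCTWalk P (pointInit x))
    (hd : 3 ≤ d) (hN : 2 ≤ N) (hε : 0 < ε) (hε₁ : ε < 1) (hR : 1 ≤ R) (hL : 0 < L) (hLN : L ≤ N)
    (hRL : R ≤ 4 * N ^ (-(ε / 2)) * L) (hx : x ∉ torusBall 0 L) :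
    P.real {ω | hitT (torusBall 0 R ∪ extBdry adj (torusBall 0 R)) ω ≤ tstar N} ≤
      hittingConst d ε * N ^ (-(ε / 8)) := by
  have : NeZero N := ⟨by omega⟩
  have hN' : (1 : ℝ) ≤ N := by exact_mod_cast (by omega : 1 ≤ N)
  obtain ⟨μ, ν, hμ, hν, rfl⟩ := hP
  have hpow : (N : ℝ) ^ (-(ε / 4)) * N ^ (ε / 8) = N ^ (-(ε / 8)) := by
    rw [← Real.rpow_add (by linarith)]
    ring_nf
  calc _ ≤ 70 * (10 * d + 1000) * (√R / √L) * (1 + tstar N / N ^ 2) + Real.exp (-tstar N) :=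
        measureReal_hitT_union_extBdry_torusBall_le hd hN hμ hν hR hL hLN hx (sq_nonneg _)
    _ ≤ 70 * (10 * d + 1000) * (2 * N ^ (-(ε / 4))) * ((1 + (16 / ε) ^ 2) * N ^ (ε / 8)) +
          N ^ (-1 : ℝ) := by
        rw [Real.rpow_neg_one]
        have : 0 ≤ tstar N := sq_nonneg _
        gcongr
        · exact sqrt_div_sqrt_le_rpow hL hRL
        · exact one_add_tstar_div_sq_le hN hε
        · exact exp_neg_tstar_le hN
    _ = 140 * (10 * d + 1000) * 1 * (1 + (16 / ε) ^ 2) * N ^ (-(ε / 8)) + N ^ (-1 : ℝ) := by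
        rw [← hpow]
        ring
    _ ≤ 140 * (10 * d + 1000) * (2 + 7 * d) * (1 + (16 / ε) ^ 2) * N ^ (-(ε / 8)) +
          N ^ (-(ε / 8)) := by
        gcongr
        · linarith [d.cast_nonneg (α := ℝ)]
        · linarith
    _ = hittingConst d ε * N ^ (-(ε / 8)) := by
        rw [hittingConst]
        ring

end PolynomialScales

/-- **Lemma (basic hitting estimates).**
With `A = B(0,r_N)`, `B = B(0,N^{1−ε/2})`, `B' = B(0,N^{1−ε/2}/2)`,
`C = B(0,N/4)` and `t_* = (N log N)²`:
(i) `sup_{x∉B'} P_x[H_A ≤ T_C] ≤ c N^{−c'}`;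
(ii) `sup_{x∉B} P_x[H_{A ∪ ∂_e A} ≤ t_*] ≤ c N^{−c'}`;
(iii) `sup_{x∉C} P_x[H_{B ∪ ∂_e B} ≤ t_*] ≤ c N^{−c'}`. -/
theorem basic_hitting_estimates
    (d : ℕ) (hd : 3 ≤ d) (ε : ℝ) (hε : 0 < ε ∧ ε < 1) :
    ∃ c c' : ℝ, 0 < c ∧ 0 < c' ∧ ∀ N : ℕ, 2 ≤ N →
      ∀ rN : ℝ, 1 ≤ rN → rN ≤ (N : ℝ) ^ (1 - ε) →
        (∀ x : Torus d N, x ∉ torusBall (0 : Torus d N) ((N : ℝ) ^ (1 - ε / 2) / 2) →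
          ∀ P : Measure (CTPath d N), IsCTWalk P (pointInit x) →
            (P {ω | hitT (torusBall (0 : Torus d N) rN) ω ≤
                exitT (torusBall (0 : Torus d N) ((N : ℝ) / 4)) ω}).toReal ≤
              c * (N : ℝ) ^ (-c')) ∧
        (∀ x : Torus d N, x ∉ torusBall (0 : Torus d N) ((N : ℝ) ^ (1 - ε / 2)) →
          ∀ P : Measure (CTPath d N), IsCTWalk P (pointInit x) →
            (P {ω | hitT (torusBall (0 : Torus d N) rN ∪
                extBdry adj (torusBall (0 : Torus d N) rN)) ω ≤ tstar N}).toReal ≤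
              c * (N : ℝ) ^ (-c')) ∧
        (∀ x : Torus d N, x ∉ torusBall (0 : Torus d N) ((N : ℝ) / 4) →
          ∀ P : Measure (CTPath d N), IsCTWalk P (pointInit x) →
            (P {ω | hitT (torusBall (0 : Torus d N) ((N : ℝ) ^ (1 - ε / 2)) ∪
                extBdry adj (torusBall (0 : Torus d N) ((N : ℝ) ^ (1 - ε / 2)))) ω ≤
                tstar N}).toReal ≤
              c * (N : ℝ) ^ (-c')) := by
  refine ⟨hittingConst d ε, ε / 8, hittingConst_pos d ε, by linarith, fun N hN rN hr hrN => ?_⟩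
  have hN' : (1 : ℝ) ≤ N := by exact_mod_cast (by omega : 1 ≤ N)
  have hL_le : (N : ℝ) ^ (1 - ε / 2) ≤ N := Real.rpow_le_self_of_one_le hN' (by linarith)
  have hr_le : rN ≤ N ^ (-(ε / 2)) * N ^ (1 - ε / 2) := by
    rw [← Real.rpow_add (by linarith)]
    exact hrN.trans_eq (by ring_nf)
  have hL_eq : (N : ℝ) ^ (1 - ε / 2) = N ^ (-(ε / 2)) * N := by
    rw [← Real.rpow_add_one (by linarith), neg_add_eq_sub]
  refine ⟨fun x hx P hP => ?_, fun x hx P hP => ?_, fun x hx P hP => ?_⟩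
  · exact hP.measureReal_hitT_torusBall_le_exitT_le_rpow hd hN hε.1 hr (by positivity)
      (by linarith) (by linarith) hx
  · exact hP.measureReal_hitT_union_extBdry_torusBall_le_rpow hd hN hε.1 hε.2 hr (by positivity)
      hL_le (by linarith) hx
  · exact hP.measureReal_hitT_union_extBdry_torusBall_le_rpow hd hN hε.1 hε.2
      (Real.one_le_rpow hN' (by linarith)) (by positivity) (by linarith) (by linarith) hx

end Frag
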